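/- Let k ≥ 3 be an integer and χ a quadratic Dirichlet character modulo D with χ(−1) = (−1)^k. Define the Eisenstein series E(τ) = (1/2)·∑ χ(d)·(cτ+d)^{−k}, the absolutely convergent sum over all pairs (c,d) ∈ ℤ² with gcd(c,d) = 1 and D ∣ c. Let r be a positive divisor of D, s = D/r, and write χ = χ_r·χ_s for the unique factorization into quadratic Dirichlet characters χ_r modulo r and χ_s modulo s (concretely χ_r(x) = χ(y) for any integer y with y ≡ x (mod r) and y ≡ 1 (mod s), and symmetrically for χ_s). Choose integers α, β, γ, δ with r·α·δ − s·β·γ = 1 and set W_r = [[rα, β],[Dγ, rδ]], a matrix of determinant r. Suppose e_r : ℕ → ℂ satisfies χ_r(−β)·χ_s(αr)·(E ∣[k] W_r)(τ) = ∑_{m≥0} e_r(m)e^{2πimτ} for all τ ∈ ℍ, and suppose f ∈ M^{!,∞}_{2−k}(D,χ) with Fourier coefficients c(m) is such that some c_r : ℤ → ℂ, vanishing for m sufficiently negative, satisfies χ_r(β)·χ_s(α)·(f ∣[2−k] W_r)(τ) = ∑_m c_r(m)e^{2πimτ} for all τ ∈ ℍ. Then c_r(0) + ∑_{m>0} c(−m)·e_r(m)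 = 0 (a finite sum). -/

import Mathlib

/-!
The product of `f`, of weight `2 - k`, with the normalized Eisenstein series
`E_r = χ_r(-β) χ_s(αr) (E ∣[k] W_r)` is a weight `2` form `h` for `Γ₀(D)` with trivial character,
and the identity is the residue theorem for the differential `h dτ` on `X₀(D)`.

The residue theorem is obtained without compactifying anything (`trace_period_eq_zero`). The trace
`F = ∑ h ∣[2] g` over coset representatives has level one. A primitive `G` of `F` on the upper
half plane satisfies `G(-1/τ) = G(τ)`, because the difference is constant and vanishes at the
fixed point `i`, and likewise `G(-1/(τ+1)) = G(τ)`, because of the fixed point `e^{2πi/3}`. Hence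
`G(τ+1) = G(τ)`, which says that the integral of `F` along a horizontal segment of length `1` is
`0`. Letting the height of the segment tend to infinity, the limits of the contributions of the
individual cosets add up to `0` (`sum_limits_eq_zero`).

To compute the limits, `E_r` is rewritten as a sum `∑ ψ(c,d) (cτ+d)^{-k}` over coprime pairs,
where `ψ(c,d) = χ_r(c) χ_s(d)` if `s ∣ c` and `0` otherwise, up to the factor `r^{-k/2}/2`
(`slash_Eser_eq`). So for `g ∈ SL₂(ℤ)` the value of `E_r ∣[k] g` at `∞` is
`r^{-k/2} ψ((0,1) g⁻¹)` (`latSum_slash_tendsto`), and the cosets behave as follows.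

* The identity coset contributes `c(0) e_r(0) + ∑_{m>0} c(-m) e_r(m)` (`tendsto_period_mul`).
* The other cosets where `E_r` does not vanish are those of the `r` matrices `V_j` of determinant
  one with `W_r ((τ+j)/r) = V_j τ` (`cuspRep`, `exists_cuspRep`, `cuspRep_injective`). If `r > 1`,
  each of them contributes `c_r(0) / r` (`tendsto_slash_cuspRep`), for a total of `c_r(0)`, while
  `e_r(0) = 0`. If `r = 1`, the only such coset is the identity coset, `e_r(0) = 1`, and
  `c_r(0) = c(0)`.
* At every remaining coset `f` is bounded and `E_r` tends to `0`, so the contribution is `0`.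
-/

/-!
Statement 3 (Proposition 4.2.1): the constant term of `f ∈ M^{!,∞}_{2-k}(D,χ)` at the cusp
`∞_r = r/D` pairs against the Fourier coefficients of the normalized weight `k` Eisenstein
series `E_r` for the cusp `∞_r`: `c_r(0) + ∑_{m>0} c(-m) e_r(m) = 0`.
-/

noncomputable section

/-- The complex upper half plane, as a subset of `ℂ`. -/
def UHP : Set ℂ := {z : ℂ | 0 < z.im}

/-- A `2 × 2` integer matrix viewed as a real matrix. -/
def matR (g : Matrix (Fin 2) (Fin 2) ℤ) : Matrix (Fin 2) (Fin 2) ℝ :=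
  g.map fun x => (x : ℝ)

/-- The weight `w` slash action of a real `2 × 2` matrix `g = [[a,b],[c,d]]` (of positive
determinant) on functions: `(f ∣[w] g)(τ) = det(g)^{w/2} (cτ+d)^{-w} f((aτ+b)/(cτ+d))`. -/
def slash (w : ℤ) (g : Matrix (Fin 2) (Fin 2) ℝ) (f : ℂ → ℂ) : ℂ → ℂ := fun τ =>
  (Real.sqrt g.det : ℂ) ^ w * ((g 1 0 : ℂ) * τ + (g 1 1 : ℂ)) ^ (-w) *
    f (((g 0 0 : ℂ) * τ + (g 0 1 : ℂ)) / ((g 1 0 : ℂ) * τ + (g 1 1 : ℂ)))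

/-- `χ : ℤ → ℂ` is a quadratic Dirichlet character modulo `D`. -/
structure IsQuadDirChar (D : ℕ) (χ : ℤ → ℂ) : Prop where
  periodic : ∀ a : ℤ, χ (a + D) = χ a
  mul : ∀ a b : ℤ, χ (a * b) = χ a * χ b
  eq_zero_iff : ∀ a : ℤ, χ a = 0 ↔ ¬ IsCoprime a (D : ℤ)
  sq_vals : ∀ a : ℤ, χ a = 0 ∨ χ a = 1 ∨ χ a = -1

/-- `f : ℍ → ℂ` is a weakly holomorphic modular form of weight `w`, level `Γ₀(D)`, character
`χ`, holomorphic outside the cusp `∞`, with Fourier coefficients `c`; i.e. `f ∈ M^{!,∞}_w(D,χ)`.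
Only the restriction of `f` to the upper half plane matters. -/
structure IsWeaklyHolInfty (D : ℕ) (χ : ℤ → ℂ) (w : ℤ) (f : ℂ → ℂ) (c : ℤ → ℂ) : Prop where
  holo : DifferentiableOn ℂ f UHP
  transform : ∀ γ : Matrix.SpecialLinearGroup (Fin 2) ℤ, (D : ℤ) ∣ γ 1 0 →
    ∀ τ ∈ UHP, slash w (matR γ) f τ = χ (γ 1 1) * f τ
  coeff_bddBelow : ∃ m₀ : ℤ, ∀ m : ℤ, m < -m₀ → c m = 0
  fourier : ∀ τ ∈ UHP,
    HasSum (fun m : ℤ => c m * Complex.exp (2 * (Real.pi : ℂ) * Complex.I * m * τ)) (f τ)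
  bdd_at_other_cusps : ∀ γ : Matrix.SpecialLinearGroup (Fin 2) ℤ, ¬ (D : ℤ) ∣ γ 1 0 →
    ∃ C : ℝ, ∀ τ : ℂ, 1 ≤ τ.im → ‖slash w (matR γ) f τ‖ ≤ C

open scoped Classical in
/-- The weight `k` Eisenstein series
`E(τ) = (1/2) ∑ χ(d) (cτ+d)^{-k}`, the sum being over pairs `(c,d) ∈ ℤ²` with
`gcd(c,d) = 1` and `D ∣ c`. -/
def Eser (D : ℕ) (χ : ℤ → ℂ) (k : ℤ) : ℂ → ℂ := fun τ =>
  (1 / 2 : ℂ) * ∑' p : ℤ × ℤ,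
    if IsCoprime p.1 p.2 ∧ (D : ℤ) ∣ p.1 then
      χ p.2 * ((p.1 : ℂ) * τ + (p.2 : ℂ)) ^ (-k)
    else 0

open UpperHalfPlane
open scoped ModularForm MatrixGroups Manifold Topology

/-! ### Weight two forms of level one -/

theorem mem_UHP {z : ℂ} : z ∈ UHP ↔ 0 < z.im := Iff.rfl

theorem UHP_isOpen : IsOpen UHP := isOpen_lt continuous_const Complex.continuous_im

theorem UHP_convex : Convex ℝ UHP := convex_halfSpace_im_gt 0

theorem UHP_ne_zero {z : ℂ} (hz : z ∈ UHP) : z ≠ 0 := by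
  rintro rfl; simp [UHP] at hz

/-- Holomorphic functions on the upper half plane have primitives: the Cayley transform reduces this
to the unit disc. -/
theorem UHP_exists_primitive {F : ℂ → ℂ} (hF : DifferentiableOn ℂ F UHP) :
    ∃ G : ℂ → ℂ, ∀ τ ∈ UHP, HasDerivAt G (F τ) τ := by
  have hφ : ∀ z ∈ Metric.ball (0 : ℂ) 1,
      (1 - z ≠ 0) ∧ Complex.I * (1 + z) / (1 - z) ∈ UHP := by
    intro z hz
    have hz1 : ‖z‖ < 1 := by simpa using hz
    have h1 : 1 - z ≠ 0 := by
      intro h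
      have : z = 1 := by linear_combination -h
      simp [this] at hz1
    refine ⟨h1, ?_⟩
    have hn : 0 < Complex.normSq (1 - z) := Complex.normSq_pos.mpr h1
    have hz2 : Complex.normSq z < 1 := by
      rw [Complex.normSq_eq_norm_sq]; nlinarith [norm_nonneg z]
    have e : (Complex.I * (1 + z) / (1 - z)).im = (1 - Complex.normSq z) / Complex.normSq (1 - z) := by
      rw [Complex.div_im]
      simp only [Complex.normSq_apply, Complex.mul_im, Complex.mul_re, Complex.I_re, Complex.I_im,
        Complex.add_re, Complex.add_im, Complex.sub_re, Complex.sub_im, Complex.one_re,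
        Complex.one_im]
      ring
    rw [mem_UHP, e]
    exact div_pos (by linarith) hn
  have hdφ : ∀ z ∈ Metric.ball (0 : ℂ) 1,
      HasDerivAt (fun z : ℂ => Complex.I * (1 + z) / (1 - z)) (2 * Complex.I / (1 - z) ^ 2) z := by
    intro z hz
    have h1 := (hφ z hz).1
    have := (((hasDerivAt_id z).const_add 1).const_mul Complex.I).div
      ((hasDerivAt_id z).const_sub 1) h1
    refine this.congr_deriv ?_
    simp only [id]
    ring
  have hd : DifferentiableOn ℂ (fun z : ℂ => F (Complex.I * (1 + z) / (1 - z)) *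
      (2 * Complex.I / (1 - z) ^ 2)) (Metric.ball 0 1) := by
    refine DifferentiableOn.mul ?_ ?_
    · exact hF.comp (fun z hz => (hdφ z hz).differentiableAt.differentiableWithinAt)
        (fun z hz => (hφ z hz).2)
    · refine DifferentiableOn.div (differentiableOn_const _) (by fun_prop) ?_
      intro z hz
      exact pow_ne_zero 2 (hφ z hz).1
  obtain ⟨K, hK⟩ := hd.isExactOn_ball
  refine ⟨fun τ => K ((τ - Complex.I) / (τ + Complex.I)), fun τ hτ => ?_⟩
  have hτ' : 0 < τ.im := hτ
  have h2 : τ + Complex.I ≠ 0 := by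
    intro h
    have := congrArg Complex.im h
    simp at this
    linarith
  have hmem : (τ - Complex.I) / (τ + Complex.I) ∈ Metric.ball (0 : ℂ) 1 := by
    simp only [Metric.mem_ball, dist_zero_right, norm_div]
    rw [div_lt_one (norm_pos_iff.mpr h2)]
    refine lt_of_pow_lt_pow_left₀ 2 (norm_nonneg _) ?_
    rw [← Complex.normSq_eq_norm_sq, ← Complex.normSq_eq_norm_sq]
    simp only [Complex.normSq_apply, Complex.add_re, Complex.add_im, Complex.sub_re,
      Complex.sub_im, Complex.I_re, Complex.I_im]
    nlinarith
  have hu : HasDerivAt (fun τ : ℂ => (τ - Complex.I) / (τ + Complex.I))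
      (2 * Complex.I / (τ + Complex.I) ^ 2) τ := by
    have := ((hasDerivAt_id τ).sub_const Complex.I).div
      ((hasDerivAt_id τ).add_const Complex.I) h2
    refine this.congr_deriv ?_
    simp only [id]
    ring
  have := (hK _ hmem).comp τ hu
  refine this.congr_deriv ?_
  have e1 : 1 - (τ - Complex.I) / (τ + Complex.I) = 2 * Complex.I / (τ + Complex.I) := by
    field_simp; ring
  have e2 : Complex.I * (1 + (τ - Complex.I) / (τ + Complex.I)) / (2 * Complex.I / (τ + Complex.I))
      = τ := by
    have := Complex.I_ne_zero
    field_simp; ring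
  simp only [e1, e2]
  have := Complex.I_ne_zero
  field_simp

/-- The residue theorem at level one: a holomorphic weight `2` form for `SL₂(ℤ)` has zero integral
over a period. Its primitive is invariant under `S` and `ST`, since both have a fixed point in the
upper half plane, hence under `T`. -/
theorem levelOne_period_eq_zero {F : ℂ → ℂ} (hF : DifferentiableOn ℂ F UHP)
    (hS : ∀ τ ∈ UHP, F (-1 / τ) = τ ^ 2 * F τ) (hT : ∀ τ ∈ UHP, F (τ + 1) = F τ)
    {y : ℝ} (hy : 0 < y) : ∫ x in (0 : ℝ)..1, F (x + y * Complex.I) = 0 := by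
  obtain ⟨G, hG⟩ := UHP_exists_primitive hF
  have hSm : ∀ τ ∈ UHP, -1 / τ ∈ UHP := by
    intro τ hτ
    have h0 := UHP_ne_zero hτ
    rw [mem_UHP, neg_div, Complex.neg_im, one_div, Complex.inv_im, neg_div, neg_neg]
    exact div_pos hτ (Complex.normSq_pos.mpr h0)
  have hTm : ∀ τ ∈ UHP, τ + 1 ∈ UHP := by
    intro τ hτ
    simpa [UHP] using hτ
  have hconst : ∀ H : ℂ → ℂ, (∀ τ ∈ UHP, HasDerivAt H 0 τ) → ∀ a ∈ UHP, ∀ b ∈ UHP, H a = H b := by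
    intro H hH a ha b hb
    exact UHP_convex.is_const_of_fderivWithin_eq_zero (𝕜 := ℂ)
      (fun z hz => (hH z hz).differentiableAt.differentiableWithinAt)
      (fun z hz => by
        rw [fderivWithin_of_isOpen UHP_isOpen hz]
        have := (hH z hz).hasFDerivAt.fderiv
        rw [this]; ext; simp) ha hb
  have hderS : ∀ τ ∈ UHP, HasDerivAt (fun z => G (-1 / z)) (F τ) τ := by
    intro τ hτ
    have h0 := UHP_ne_zero hτ
    have h1 : HasDerivAt (fun z : ℂ => -1 / z) (1 / τ ^ 2) τ := by
      have := (hasDerivAt_const τ (-1 : ℂ)).div (hasDerivAt_id τ) h0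
      refine this.congr_deriv ?_
      simp
    have := (hG _ (hSm τ hτ)).comp τ h1
    rw [hS τ hτ] at this
    refine this.congr_deriv ?_
    field_simp
  have hGS : ∀ τ ∈ UHP, G (-1 / τ) = G τ := by
    intro τ hτ
    have hI : Complex.I ∈ UHP := by simp [UHP]
    have := hconst (fun z => G (-1 / z) - G z) (fun z hz => by
      exact ((hderS z hz).sub (hG z hz)).congr_deriv (sub_self _)) τ hτ _ hI
    have e : -1 / Complex.I = Complex.I := by
      rw [div_eq_iff Complex.I_ne_zero]; simp
    simp only [e, sub_self] at this
    exact sub_eq_zero.mp this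
  have hGT : ∀ τ ∈ UHP, G (τ + 1) = G τ := by
    intro τ hτ
    let ρ : ℂ := ⟨-1/2, √3 / 2⟩
    have hρ : ρ ∈ UHP := by
      change 0 < √3 / 2
      positivity
    have hρ2 : -1 / (ρ + 1) = ρ := by
      rw [div_eq_iff (UHP_ne_zero (hTm ρ hρ))]
      have h3 : √3 * √3 = 3 := Real.mul_self_sqrt (by norm_num)
      apply Complex.ext
      · simp [ρ]; nlinarith
      · simp [ρ]; ring
    have := hconst (fun z => G (-1 / (z + 1)) - G z) (fun z hz => by
      have h1 := (hderS _ (hTm z hz)).comp_add_const z 1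
      rw [hT z hz] at h1
      exact (h1.sub (hG z hz)).congr_deriv (sub_self _)) τ hτ _ hρ
    simp only [hρ2, sub_self] at this
    rw [← hGS _ (hTm τ hτ)]
    exact sub_eq_zero.mp this
  have hmem : ∀ x : ℝ, (x : ℂ) + y * Complex.I ∈ UHP := by
    intro x; simpa [UHP] using hy
  have hc : Continuous fun x : ℝ => F (x + y * Complex.I) := by
    have : Continuous fun x : ℝ => (x : ℂ) + y * Complex.I := by fun_prop
    exact hF.continuousOn.comp_continuous this hmem
  rw [intervalIntegral.integral_eq_sub_of_hasDerivAt
    (f := fun x : ℝ => G (x + y * Complex.I)) _ (hc.intervalIntegrable _ _)]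
  · have := hGT _ (hmem 0)
    rw [sub_eq_zero, ← this]
    congr 1
    push_cast
    ring
  · intro x _
    have h1 : HasDerivAt (fun x : ℝ => (x : ℂ) + y * Complex.I) 1 x :=
      (Complex.ofRealCLM.hasDerivAt (x := x)).add_const _
    exact ((hG _ (hmem x)).comp x h1).congr_deriv (mul_one _)

/-! ### Periods and the trace to level one -/

/-- The integral of `R` along the horizontal segment from `iy` to `1 + iy`. It is meaningful for
`y > 0`; otherwise `ofComplex` takes junk values. -/
def period (R : ℍ → ℂ) (y : ℝ) : ℂ := ∫ x in (0 : ℝ)..1, R (ofComplex (x + y * Complex.I))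

/-- The filter of approach to the cusp `∞` inside the vertical strip `|Re τ| ≤ 1`, which contains
the horizontal segments defining `period`. -/
def cuspStrip : Filter ℍ := Filter.comap UpperHalfPlane.im Filter.atTop ⊓
  Filter.principal {z : ℍ | |z.re| ≤ 1}

theorem continuous_horizontal {R : ℍ → ℂ} (hR : Continuous R) {y : ℝ} (hy : 0 < y) :
    Continuous fun x : ℝ => R (ofComplex (x + y * Complex.I)) := by
  have h : (fun x : ℝ => R (ofComplex (x + y * Complex.I))) =
      fun x : ℝ => R ⟨x + y * Complex.I, by simpa using hy⟩ := by
    funext x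
    rw [ofComplex_apply_of_im_pos]
  rw [h]
  refine hR.comp ?_
  rw [UpperHalfPlane.isEmbedding_coe.continuous_iff]
  simp only [Function.comp_def]
  fun_prop

theorem period_add {R R' : ℍ → ℂ} (hR : Continuous R) (hR' : Continuous R') {y : ℝ} (hy : 0 < y) :
    period (R + R') y = period R y + period R' y :=
  intervalIntegral.integral_add ((continuous_horizontal hR hy).intervalIntegrable _ _)
    ((continuous_horizontal hR' hy).intervalIntegrable _ _)

theorem period_sum {ι : Type*} (s : Finset ι) {R : ι → ℍ → ℂ} (hR : ∀ i, Continuous (R i))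
    {y : ℝ} (hy : 0 < y) : period (∑ i ∈ s, R i) y = ∑ i ∈ s, period (R i) y := by
  unfold period
  rw [← intervalIntegral.integral_finsetSum
    fun i _ => (continuous_horizontal (hR i) hy).intervalIntegrable _ _]
  simp

theorem period_smul (a : ℂ) (R : ℍ → ℂ) (y : ℝ) : period (a • R) y = a * period R y := by
  simp [period]

theorem tendsto_period {R : ℍ → ℂ} (hR : Continuous R) {L : ℂ}
    (h : Filter.Tendsto R cuspStrip (𝓝 L)) :
    Filter.Tendsto (period R) Filter.atTop (𝓝 L) := by
  rw [Metric.tendsto_nhds]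
  intro ε hε
  have h1 := (Metric.tendsto_nhds.mp h) (ε / 2) (half_pos hε)
  rw [cuspStrip, Filter.eventually_inf_principal, Filter.eventually_comap] at h1
  filter_upwards [h1, Filter.eventually_gt_atTop 0] with y hy hy0
  have hi := (continuous_horizontal hR hy0).intervalIntegrable (μ := MeasureTheory.volume) 0 1
  have e : period R y - L = ∫ x in (0 : ℝ)..1, (R (ofComplex (x + y * Complex.I)) - L) := by
    rw [intervalIntegral.integral_sub hi (by simp)]
    simp [period]
  rw [dist_eq_norm, e]
  refine lt_of_le_of_lt (intervalIntegral.norm_integral_le_of_norm_le_const (C := ε / 2) ?_) ?_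
  · intro x hx
    rw [Set.uIoc_of_le zero_le_one] at hx
    have him : 0 < ((x : ℂ) + y * Complex.I).im := by simpa using hy0
    rw [ofComplex_apply_of_im_pos him, ← dist_eq_norm]
    refine (hy ⟨x + y * Complex.I, him⟩ ?_ ?_).le
    · simp [UpperHalfPlane.im]
    · simp only [UpperHalfPlane.re]
      simp [abs_of_pos hx.1, hx.2]
  · simp; linarith

/-- A holomorphic weight `2` form `h` for a subgroup `Γ` of finite index: the periods of its
translates by coset representatives add up to `0`, by the level one case applied to the trace. -/
theorem trace_period_eq_zero (Γ : Subgroup SL(2, ℤ)) [Fintype (SL(2, ℤ) ⧸ Γ)]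
    {h : ℍ → ℂ} (hh : MDiff h) (hinv : ∀ g ∈ Γ, h ∣[(2 : ℤ)] g = h) {y : ℝ} (hy : 0 < y) :
    ∑ q : SL(2, ℤ) ⧸ Γ, period (h ∣[(2 : ℤ)] q.out⁻¹) y = 0 := by
  have hmk : ∀ g : SL(2, ℤ), h ∣[(2 : ℤ)] (g : SL(2, ℤ) ⧸ Γ).out⁻¹ = h ∣[(2 : ℤ)] g⁻¹ := by
    intro g
    obtain ⟨γ, hγ⟩ := QuotientGroup.mk_out_eq_mul Γ g
    rw [hγ, mul_inv_rev, SlashAction.slash_mul, hinv _ (inv_mem γ.2)]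
  have hd : ∀ g : SL(2, ℤ), MDiff (h ∣[(2 : ℤ)] g) := fun g => hh.slash 2 (g : GL (Fin 2) ℝ)
  set F : ℍ → ℂ := ∑ q : SL(2, ℤ) ⧸ Γ, h ∣[(2 : ℤ)] q.out⁻¹ with hF
  have hFd : MDiff F := by
    rw [hF]
    exact MDifferentiable.sum fun q _ => hd _
  have hFs : ∀ g : SL(2, ℤ), F ∣[(2 : ℤ)] g = F := by
    intro g
    rw [hF, SlashAction.sum_slash]
    rw [← Equiv.sum_comp (MulAction.toPerm g : Equiv.Perm (SL(2, ℤ) ⧸ Γ))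
      (fun q => (h ∣[(2 : ℤ)] q.out⁻¹) ∣[(2 : ℤ)] g)]
    refine Finset.sum_congr rfl fun q _ => ?_
    rw [← SlashAction.slash_mul]
    induction q using QuotientGroup.induction_on with
    | H x =>
      rw [MulAction.toPerm_apply, MulAction.Quotient.smul_coe, SlashAction.slash_mul, hmk, hmk,
        ← SlashAction.slash_mul, smul_eq_mul, mul_inv_rev, inv_mul_cancel_right]
  rw [← period_sum _ (fun q => (hd _).continuous) hy, ← hF]
  refine levelOne_period_eq_zero (F := fun z => F (ofComplex z)) (mdifferentiable_iff.mp hFd) ?_ ?_ hy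
  · intro τ hτ
    have h1 := congrFun (hFs ModularGroup.S) ⟨τ, hτ⟩
    rw [ModularForm.SL_slash_apply, modular_S_smul, ModularGroup.denom_S] at h1
    have e : -1 / τ = (-τ)⁻¹ := by rw [neg_div, one_div, inv_neg]
    have h0 := UHP_ne_zero hτ
    have him : 0 < ((-τ)⁻¹).im := (UpperHalfPlane.mk _ (UpperHalfPlane.im_inv_neg_coe_pos ⟨τ, hτ⟩)).im_pos
    simp only [e]
    rw [ofComplex_apply_of_im_pos him, ofComplex_apply_of_im_pos hτ, ← h1]
    simp only
    rw [zpow_neg, mul_comm (τ ^ 2), mul_assoc]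
    rw [show (τ ^ (2 : ℤ))⁻¹ * τ ^ 2 = 1 from inv_mul_cancel₀ (pow_ne_zero 2 h0), mul_one]
  · intro τ hτ
    have h1 := congrFun (hFs ModularGroup.T) ⟨τ, hτ⟩
    rw [ModularForm.SL_slash_apply, modular_T_smul] at h1
    have him : 0 < (τ + 1).im := by simpa [UHP] using hτ
    rw [ofComplex_apply_of_im_pos him, ofComplex_apply_of_im_pos hτ, ← h1]
    have e : UpperHalfPlane.mk (τ + 1) him = (1 : ℝ) +ᵥ UpperHalfPlane.mk τ hτ := by
      ext; simp [add_comm]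
    rw [e]
    rw [ModularGroup.denom_apply]
    simp [ModularGroup.T]

/-! ### Fourier expansions -/

/-- The exponential `e^{2πimτ}`. -/
def qexp (m : ℤ) (τ : ℂ) : ℂ := Complex.exp (2 * (Real.pi : ℂ) * Complex.I * m * τ)

theorem norm_qexp (m : ℤ) (τ : ℂ) : ‖qexp m τ‖ = Real.exp (-(2 * Real.pi * m * τ.im)) := by
  rw [qexp, Complex.norm_exp]
  congr 1
  simp [Complex.mul_re, Complex.mul_im]

theorem qexp_mul (m n : ℤ) (τ : ℂ) : qexp m τ * qexp n τ = qexp (m + n) τ := by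
  rw [qexp, qexp, qexp, ← Complex.exp_add]
  congr 1
  push_cast
  ring

theorem qexp_zero (τ : ℂ) : qexp 0 τ = 1 := by simp [qexp]

theorem differentiable_qexp (m : ℤ) : Differentiable ℂ (qexp m) := by
  unfold qexp
  fun_prop

/-- `g` has the Fourier expansion `∑ a(m) e^{2πimτ}` over all integers `m`, convergent on the whole
upper half plane. -/
def HasQExp (g : ℂ → ℂ) (a : ℤ → ℂ) : Prop :=
  ∀ τ ∈ UHP, HasSum (fun m : ℤ => a m * qexp m τ) (g τ)

theorem integral_qexp (m : ℤ) (y : ℝ) :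
    ∫ x in (0 : ℝ)..1, qexp m (x + y * Complex.I) = if m = 0 then 1 else 0 := by
  split_ifs with h
  · subst h; simp [qexp_zero]
  · have hc : 2 * (Real.pi : ℂ) * Complex.I * m ≠ 0 := by
      have : (m : ℂ) ≠ 0 := by exact_mod_cast h
      have hpi : (Real.pi : ℂ) ≠ 0 := by exact_mod_cast Real.pi_ne_zero
      simp [this, hpi]
    have e : ∀ x : ℝ, qexp m (x + y * Complex.I) =
        Complex.exp (2 * (Real.pi : ℂ) * Complex.I * m * x) * qexp m (y * Complex.I) := by
      intro x
      rw [qexp, qexp, ← Complex.exp_add]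
      congr 1
      ring
    simp_rw [e]
    rw [intervalIntegral.integral_mul_const, integral_exp_mul_complex hc]
    have : Complex.exp (2 * (Real.pi : ℂ) * Complex.I * m * (1 : ℝ)) = 1 := by
      rw [Complex.exp_eq_one_iff]
      exact ⟨m, by push_cast; ring⟩
    rw [this]
    simp

theorem HasQExp.summable_norm {g : ℂ → ℂ} {a : ℤ → ℂ} (h : HasQExp g a) {y : ℝ} (hy : 0 < y) :
    Summable fun m : ℤ => ‖a m‖ * Real.exp (-(2 * Real.pi * m * y)) := by
  have := (h (y * Complex.I) (by simpa [UHP] using hy)).summable.norm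
  refine this.congr fun m => ?_
  rw [norm_mul, norm_qexp]
  simp

/-- The coefficients of an expansion are the Fourier integrals of the function at any height. -/
theorem HasQExp.integral_eq {g : ℂ → ℂ} {a : ℤ → ℂ} (h : HasQExp g a) (n : ℤ) {y : ℝ}
    (hy : 0 < y) :
    ∫ x in (0 : ℝ)..1, qexp (-n) (x + y * Complex.I) * g (x + y * Complex.I) = a n := by
  have hmem : ∀ x : ℝ, (x : ℂ) + y * Complex.I ∈ UHP := by
    intro x; simpa [UHP] using hy
  have key := intervalIntegral.hasSum_integral_of_dominated_convergence
    (μ := MeasureTheory.volume) (a := 0) (b := 1)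
    (F := fun (m : ℤ) (x : ℝ) => a m * qexp (m - n) (x + y * Complex.I))
    (f := fun x : ℝ => qexp (-n) (x + y * Complex.I) * g (x + y * Complex.I))
    (fun m _ => Real.exp (2 * Real.pi * n * y) * (‖a m‖ * Real.exp (-(2 * Real.pi * m * y))))
    (fun m => by
      refine Continuous.aestronglyMeasurable ?_
      have := (differentiable_qexp (m - n)).continuous
      fun_prop)
    (fun m => Filter.Eventually.of_forall fun x _ => by
      rw [norm_mul, norm_qexp, mul_left_comm, ← Real.exp_add]
      refine le_of_eq ?_
      congr 2
      simp
      ring)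
    (Filter.Eventually.of_forall fun x _ => (h.summable_norm hy).mul_left _)
    (by simp)
    (Filter.Eventually.of_forall fun x _ => by
      refine ((h _ (hmem x)).mul_left (qexp (-n) (x + y * Complex.I))).congr_fun ?_
      intro m
      rw [mul_left_comm, qexp_mul, neg_add_eq_sub])
  refine key.unique ?_
  have e : ∀ m : ℤ, ∫ x in (0 : ℝ)..1, a m * qexp (m - n) (x + y * Complex.I) =
      if m = n then a n else 0 := by
    intro m
    rw [intervalIntegral.integral_const_mul, integral_qexp]
    simp only [sub_eq_zero]
    split_ifs with hm
    · rw [hm, mul_one]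
    · rw [mul_zero]
  simp_rw [e]
  exact hasSum_ite_eq n (a n)

theorem HasQExp.differentiableOn {g : ℂ → ℂ} {a : ℤ → ℂ} (h : HasQExp g a)
    (ha : ∀ m < 0, a m = 0) : DifferentiableOn ℂ g UHP := by
  intro τ hτ
  have hτ' : 0 < τ.im := hτ
  set U : Set ℂ := {z | τ.im / 2 < z.im} with hU
  have hUo : IsOpen U := isOpen_lt continuous_const Complex.continuous_im
  have hUs : U ⊆ UHP := fun z hz => lt_trans (half_pos hτ') hz
  have h1 := Complex.differentiableOn_tsum_of_summable_norm (U := U)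
    (F := fun (m : ℤ) z => a m * qexp m z) (h.summable_norm (half_pos hτ'))
    (fun m => ((differentiable_qexp m).const_mul _).differentiableOn) hUo (by
      intro m w hw
      rw [norm_mul, norm_qexp]
      rcases lt_or_ge m 0 with hm | hm
      · simp [ha m hm]
      · have hw' : τ.im / 2 ≤ w.im := le_of_lt hw
        have : (0 : ℝ) ≤ m := by exact_mod_cast hm
        have := Real.pi_pos
        gcongr)
  have hτU : τ ∈ U := by
    change τ.im / 2 < τ.im
    linarith
  refine (DifferentiableAt.congr_of_eventuallyEq (h1.differentiableAt (hUo.mem_nhds hτU))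
    ?_).differentiableWithinAt
  filter_upwards [hUo.mem_nhds hτU] with z hz
  exact (h z (hUs hz)).tsum_eq.symm

theorem HasQExp.tendsto {g : ℂ → ℂ} {a : ℤ → ℂ} (h : HasQExp g a)
    (ha : ∀ m < 0, a m = 0) :
    Filter.Tendsto g (Filter.comap Complex.im Filter.atTop) (𝓝 (a 0)) := by
  have h1 : Filter.Tendsto (fun τ : ℂ => ∑' m : ℤ, a m * qexp m τ)
      (Filter.comap Complex.im Filter.atTop) (𝓝 (∑' m : ℤ, if m = 0 then a 0 else 0)) := by
    refine tendsto_tsum_of_dominated_convergence (h.summable_norm one_pos) ?_ ?_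
    · intro m
      rcases lt_trichotomy m 0 with hm | hm | hm
      · simpa [ha m hm, hm.ne] using tendsto_const_nhds
      · subst hm; simpa [qexp_zero] using tendsto_const_nhds
      · rw [if_neg hm.ne']
        rw [tendsto_zero_iff_norm_tendsto_zero]
        have h2 : Filter.Tendsto (fun y : ℝ => ‖a m‖ * Real.exp (-(2 * Real.pi * m * y)))
            Filter.atTop (𝓝 (‖a m‖ * 0)) := by
          refine Filter.Tendsto.const_mul _ (Real.tendsto_exp_neg_atTop_nhds_zero.comp ?_)
          refine Filter.Tendsto.const_mul_atTop ?_ Filter.tendsto_id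
          have : (0 : ℝ) < m := by exact_mod_cast hm
          have := Real.pi_pos
          positivity
        rw [mul_zero] at h2
        refine (h2.comp Filter.tendsto_comap).congr fun z => ?_
        rw [norm_mul, norm_qexp, Function.comp_apply]
    · have : ∀ᶠ z : ℂ in Filter.comap Complex.im Filter.atTop, 1 ≤ z.im :=
        Filter.tendsto_comap.eventually (Filter.eventually_ge_atTop 1)
      filter_upwards [this] with z hz m
      rw [norm_mul, norm_qexp]
      rcases lt_or_ge m 0 with hm | hm
      · simp [ha m hm]
      · have : (0 : ℝ) ≤ m := by exact_mod_cast hm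
        have := Real.pi_pos
        gcongr
  rw [tsum_ite_eq] at h1
  refine h1.congr' ?_
  have : ∀ᶠ z : ℂ in Filter.comap Complex.im Filter.atTop, 0 < z.im :=
    Filter.tendsto_comap.eventually (Filter.eventually_gt_atTop 0)
  filter_upwards [this] with z hz
  exact (h z hz).tsum_eq

/-- A function bounded near `i∞` has no negative Fourier coefficients: let the height tend to
infinity in the Fourier integral. -/
theorem HasQExp.coeff_eq_zero_of_bounded {g : ℂ → ℂ} {a : ℤ → ℂ} (h : HasQExp g a) {C : ℝ}
    (hC : ∀ τ : ℂ, 1 ≤ τ.im → ‖g τ‖ ≤ C) {m : ℤ} (hm : m < 0) : a m = 0 := by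
  have hb : ∀ y : ℝ, 1 ≤ y → ‖a m‖ ≤ C * Real.exp (-(2 * Real.pi * (-m) * y)) := by
    intro y hy
    rw [← h.integral_eq m (lt_of_lt_of_le one_pos hy)]
    have := intervalIntegral.norm_integral_le_of_norm_le_const (a := 0) (b := 1)
      (f := fun x : ℝ => qexp (-m) (x + y * Complex.I) * g (x + y * Complex.I))
      (C := C * Real.exp (-(2 * Real.pi * (-m) * y))) (by
        intro x _
        rw [norm_mul, norm_qexp, mul_comm]
        have h1 := hC (x + y * Complex.I) (by simpa using hy)
        have h2 : ((x : ℂ) + y * Complex.I).im = y := by simp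
        rw [h2]
        push_cast
        gcongr)
    simpa using this
  have h2 : Filter.Tendsto (fun y : ℝ => C * Real.exp (-(2 * Real.pi * (-m) * y)))
      Filter.atTop (𝓝 (C * 0)) := by
    refine Filter.Tendsto.const_mul _ (Real.tendsto_exp_neg_atTop_nhds_zero.comp ?_)
    refine Filter.Tendsto.const_mul_atTop ?_ Filter.tendsto_id
    have : (0 : ℝ) < -m := by exact_mod_cast neg_pos.mpr hm
    have := Real.pi_pos
    positivity
  rw [mul_zero] at h2
  have h3 : ‖a m‖ ≤ 0 := ge_of_tendsto h2
    ((Filter.eventually_ge_atTop 1).mono fun y hy => hb y hy)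
  exact norm_le_zero_iff.mp h3

theorem cuspStrip_le : Filter.Tendsto (fun z : ℍ => (z : ℂ)) cuspStrip
    (Filter.comap Complex.im Filter.atTop) := by
  rw [Filter.tendsto_comap_iff]
  exact Filter.tendsto_comap.mono_left inf_le_left

/-- The limit of the period of a product `f e` is the constant term of the product of the two
Fourier expansions, when `f` has finitely many negative coefficients and `e` has none. The
principal part of `f` is integrated against `e` exactly; the rest of `f` has a limit at `i∞`. -/
theorem tendsto_period_mul {f e : ℂ → ℂ} {c a : ℤ → ℂ} (hf : HasQExp f c) (he : HasQExp e a)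
    (hfd : DifferentiableOn ℂ f UHP)
    {M : ℕ} (hc : ∀ m : ℤ, m < -M → c m = 0) (ha : ∀ m < 0, a m = 0) :
    Filter.Tendsto (period fun z : ℍ => f z * e z) Filter.atTop
      (𝓝 (c 0 * a 0 + ∑ m ∈ Finset.Icc 1 M, c (-(m : ℤ)) * a m)) := by
  set P : ℂ → ℂ := fun z => ∑ m ∈ Finset.Icc 1 M, c (-(m : ℤ)) * qexp (-(m : ℤ)) z with hP
  have hPd : Differentiable ℂ P := by
    rw [hP]
    exact Differentiable.fun_sum fun m _ => (differentiable_qexp _).const_mul _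
  have hfP : HasQExp (fun z => f z - P z) (fun m => if m < 0 then 0 else c m) := by
    intro τ hτ
    have h1 : HasSum (fun m : ℤ => if m < 0 then c m * qexp m τ else 0) (P τ) := by
      have h2 := hasSum_sum_of_ne_finset_zero (L := .unconditional ℤ)
        (s := (Finset.Icc 1 M).image fun m : ℕ => -(m : ℤ))
        (f := fun m : ℤ => if m < 0 then c m * qexp m τ else 0) (by
          intro m hm
          split_ifs with hm0
          · rw [hc m, zero_mul]
            by_contra hcon
            refine hm (Finset.mem_image.mpr ⟨m.natAbs, Finset.mem_Icc.mpr ⟨?_, ?_⟩, ?_⟩) <;> omega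
          · rfl)
      convert h2 using 1
      rw [Finset.sum_image (by intro x _ y _ hxy; simpa using hxy)]
      refine Finset.sum_congr rfl fun m hm => ?_
      rw [if_pos]
      have := (Finset.mem_Icc.mp hm).1
      omega
    refine ((hf τ hτ).sub h1).congr_fun fun m => ?_
    by_cases hm : m < 0 <;> simp [hm]
  have hcont : ∀ {u : ℂ → ℂ}, DifferentiableOn ℂ u UHP → Continuous fun z : ℍ => u z :=
    fun hu => hu.continuousOn.comp_continuous UpperHalfPlane.continuous_coe fun z => z.im_pos
  have hfPc : Continuous fun z : ℍ => f z - P z := hcont (hfd.sub hPd.differentiableOn)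
  have hPc : Continuous fun z : ℍ => P z := hcont hPd.differentiableOn
  have hed := he.differentiableOn ha
  have hmain : Filter.Tendsto (period fun z : ℍ => (f z - P z) * e z) Filter.atTop
      (𝓝 (c 0 * a 0)) := by
    refine tendsto_period (hfPc.fun_mul (hcont hed)) ?_
    have h1 := (hfP.tendsto fun m hm => if_pos hm).comp cuspStrip_le
    have h2 := (he.tendsto ha).comp cuspStrip_le
    have h3 := h1.mul h2
    simp only [lt_irrefl, if_false] at h3
    exact h3
  have hsum : ∀ y : ℝ, 0 < y → (period fun z : ℍ => P z * e z) y =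
      ∑ m ∈ Finset.Icc 1 M, c (-(m : ℤ)) * a m := by
    intro y hy
    have e1 : (fun z : ℍ => P z * e z) =
        ∑ m ∈ Finset.Icc 1 M, c (-(m : ℤ)) • fun z : ℍ => qexp (-(m : ℤ)) z * e z := by
      funext z
      simp [hP, Finset.sum_mul, mul_assoc]
    rw [e1, period_sum _ (fun m => ?_) hy]
    · refine Finset.sum_congr rfl fun m _ => ?_
      rw [period_smul, ← he.integral_eq m hy, period]
      congr 1
      refine intervalIntegral.integral_congr fun x _ => ?_
      have him : 0 < ((x : ℂ) + y * Complex.I).im := by simpa using hy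
      rw [ofComplex_apply_of_im_pos him]
    · exact ((hcont (differentiable_qexp _).differentiableOn).mul (hcont hed)).const_smul _
  refine (hmain.add_const (∑ m ∈ Finset.Icc 1 M, c (-(m : ℤ)) * a m)).congr' ?_
  filter_upwards [Filter.eventually_gt_atTop 0] with y hy
  rw [← hsum y hy, ← period_add (hfPc.fun_mul (hcont hed)) (hPc.fun_mul (hcont hed)) hy]
  congr 1
  funext z
  simp only [Pi.add_apply]
  ring

/-! ### Lattice sums -/

/-- The Eisenstein-type series `∑ ψ(c,d) (cτ+d)^{-k}` over all pairs of integers, with weight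
function `ψ`. -/
def latSum (k : ℤ) (ψ : ℤ × ℤ → ℂ) (τ : ℂ) : ℂ :=
  ∑' p : ℤ × ℤ, ψ p * ((p.1 : ℂ) * τ + (p.2 : ℂ)) ^ (-k)

/-- The bijection `p ↦ p [[a,b],[c,d]]` on integral row vectors, for a matrix of determinant one. -/
def rowMul (a b c d : ℤ) (h : a * d - b * c = 1) : ℤ × ℤ ≃ ℤ × ℤ where
  toFun p := (p.1 * a + p.2 * c, p.1 * b + p.2 * d)
  invFun p := (p.1 * d - p.2 * c, p.2 * a - p.1 * b)
  left_inv p := by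
    ext
    · simp only; linear_combination p.1 * h
    · simp only; linear_combination p.2 * h
  right_inv p := by
    ext
    · simp only; linear_combination p.1 * h
    · simp only; linear_combination p.2 * h

theorem SL_det_eq (g : SL(2, ℤ)) : g 0 0 * g 1 1 - g 0 1 * g 1 0 = 1 := by
  rw [← Matrix.det_fin_two, g.det_coe]

theorem denom_SL (g : SL(2, ℤ)) (z : ℍ) :
    denom g z = (g 1 0 : ℂ) * z + (g 1 1 : ℂ) := ModularGroup.denom_apply g z

theorem coe_SL_smul (g : SL(2, ℤ)) (z : ℍ) : ((g • z : ℍ) : ℂ) =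
    ((g 0 0 : ℂ) * z + (g 0 1 : ℂ)) / ((g 1 0 : ℂ) * z + (g 1 1 : ℂ)) := by
  rw [coe_specialLinearGroup_apply]
  simp

theorem denom_SL_ne_zero (g : SL(2, ℤ)) (z : ℍ) : (g 1 0 : ℂ) * z + (g 1 1 : ℂ) ≠ 0 := by
  rw [← denom_SL]
  exact denom_ne_zero _ z

/-- The slash action on `latSum` is the substitution of `p g⁻¹` in the weight function. -/
theorem latSum_slash (k : ℤ) (ψ : ℤ × ℤ → ℂ) (g : SL(2, ℤ)) :
    ((fun z : ℍ => latSum k ψ z) ∣[k] g) = fun z : ℍ =>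
      latSum k (fun p => ψ (p.1 * g 1 1 - p.2 * g 1 0, p.2 * g 0 0 - p.1 * g 0 1)) z := by
  funext z
  rw [ModularForm.SL_slash_apply, denom_SL, coe_SL_smul]
  have hne := denom_SL_ne_zero g z
  rw [latSum, ← tsum_mul_right, latSum]
  refine Eq.trans ?_ ((rowMul _ _ _ _ (SL_det_eq g)).tsum_eq _)
  refine tsum_congr fun p => ?_
  have hdet := SL_det_eq g
  have e1 : (p.1 * g 0 0 + p.2 * g 1 0) * g 1 1 - (p.1 * g 0 1 + p.2 * g 1 1) * g 1 0 = p.1 := by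
    linear_combination p.1 * hdet
  have e2 : (p.1 * g 0 1 + p.2 * g 1 1) * g 0 0 - (p.1 * g 0 0 + p.2 * g 1 0) * g 0 1 = p.2 := by
    linear_combination p.2 * hdet
  simp only [rowMul, Equiv.coe_fn_mk, e1, e2]
  rw [mul_assoc, ← mul_zpow]
  congr 2
  push_cast
  rw [add_mul, mul_assoc, div_mul_cancel₀ _ hne]
  ring

/-- A summable majorant for `(cτ+d)^{-k}`, uniform in the part `Im τ ≥ 1` of the vertical strip. -/
theorem norm_linear_zpow_le {k : ℤ} (hk : 3 ≤ k) :
    ∃ u : ℤ × ℤ → ℝ, Summable u ∧ ∀ z : ℍ, |z.re| ≤ 1 → 1 ≤ z.im → ∀ p : ℤ × ℤ,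
      ‖((p.1 : ℂ) * z + (p.2 : ℂ)) ^ (-k)‖ ≤ u p := by
  have hkr : (2 : ℝ) < k := by
    have : (3 : ℝ) ≤ k := by exact_mod_cast hk
    linarith
  refine ⟨fun p => EisensteinSeries.r ⟨⟨1, 1⟩, one_pos⟩ ^ (-(k : ℝ)) * ‖![p.1, p.2]‖ ^ (-(k : ℝ)),
    ?_, ?_⟩
  · have h1 := (EisensteinSeries.summable_one_div_norm_rpow hkr)
    rw [← (finTwoArrowEquiv ℤ).symm.summable_iff] at h1
    exact h1.mul_left _
  · intro z hz1 hz2 p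
    have h1 := EisensteinSeries.summand_bound_of_mem_verticalStrip (z := z) (k := k)
      (by linarith) ![p.1, p.2] one_pos ⟨hz1, hz2⟩
    rw [norm_zpow, ← Real.rpow_intCast]
    push_cast
    simpa using h1

/-- At `i∞` only the pairs `(0, ±1)` survive among the coprime ones. -/
theorem latSum_tendsto {k : ℤ} (hk : 3 ≤ k) {ψ : ℤ × ℤ → ℂ} (hb : ∀ p, ‖ψ p‖ ≤ 1)
    (hcop : ∀ p, ¬ IsCoprime p.1 p.2 → ψ p = 0) (hpar : ψ (0, -1) = (-1) ^ k * ψ (0, 1)) :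
    Filter.Tendsto (fun z : ℍ => latSum k ψ z) cuspStrip (𝓝 (2 * ψ (0, 1))) := by
  obtain ⟨u, hu, hbd⟩ := norm_linear_zpow_le hk
  have hlim : ∑' p : ℤ × ℤ, (if p ∈ ({(0, 1), (0, -1)} : Finset (ℤ × ℤ)) then ψ (0, 1) else 0)
      = 2 * ψ (0, 1) := by
    rw [tsum_eq_sum (s := {(0, 1), (0, -1)}) (fun p hp => if_neg hp), Finset.sum_ite_mem]
    rw [Finset.inter_self, Finset.sum_const, Finset.card_pair (by decide)]
    simp
  rw [← hlim]
  refine tendsto_tsum_of_dominated_convergence hu ?_ ?_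
  · intro p
    split_ifs with hp
    · rw [Finset.mem_insert, Finset.mem_singleton] at hp
      rcases hp with rfl | rfl
      · simpa using tendsto_const_nhds
      · rw [hpar]
        have : ((-1 : ℂ) ^ k) * ((-1 : ℂ) ^ k)⁻¹ = 1 :=
          mul_inv_cancel₀ (zpow_ne_zero _ (by norm_num))
        have e : (-1 : ℂ) ^ k * ψ (0, 1) * ((-1 : ℂ) ^ k)⁻¹ = ψ (0, 1) := by
          linear_combination ψ (0, 1) * this
        simpa [e] using tendsto_const_nhds
    · by_cases hc : IsCoprime p.1 p.2
      swap
      · simpa [hcop p hc] using tendsto_const_nhds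
      · have hp1 : p.1 ≠ 0 := by
          intro h0
          rw [h0, isCoprime_zero_left, Int.isUnit_iff] at hc
          refine hp ?_
          rw [Finset.mem_insert, Finset.mem_singleton]
          rcases hc with hc | hc
          · left; ext <;> simp [h0, hc]
          · right; ext <;> simp [h0, hc]
        have him : Filter.Tendsto UpperHalfPlane.im cuspStrip Filter.atTop :=
          Filter.tendsto_comap.mono_left inf_le_left
        have h1 : Filter.Tendsto (fun z : ℍ => z.im⁻¹) cuspStrip (𝓝 0) :=
          tendsto_inv_atTop_zero.comp him
        refine squeeze_zero_norm' ?_ h1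
        filter_upwards [him.eventually (Filter.eventually_ge_atTop 1)] with z hz
        have h2 : z.im ≤ ‖(p.1 : ℂ) * z + (p.2 : ℂ)‖ := by
          refine le_trans ?_ (Complex.abs_im_le_norm _)
          have : ((p.1 : ℂ) * z + (p.2 : ℂ)).im = p.1 * z.im := by simp
          rw [this, abs_mul, abs_of_pos z.im_pos]
          have h3 : (1 : ℝ) ≤ |(p.1 : ℝ)| := by exact_mod_cast Int.one_le_abs hp1
          nlinarith [z.im_pos]
        have h1' : 1 ≤ ‖(p.1 : ℂ) * z + (p.2 : ℂ)‖ := hz.trans h2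
        rw [norm_mul, norm_zpow]
        calc _ ≤ 1 * ‖(p.1 : ℂ) * z + (p.2 : ℂ)‖ ^ (-k) := by gcongr; exact hb p
          _ ≤ ‖(p.1 : ℂ) * z + (p.2 : ℂ)‖ ^ (-1 : ℤ) := by
              rw [one_mul]
              exact zpow_le_zpow_right₀ h1' (by omega)
          _ ≤ z.im⁻¹ := by
              rw [zpow_neg_one]
              exact inv_anti₀ z.im_pos h2
  · have him : Filter.Tendsto UpperHalfPlane.im cuspStrip Filter.atTop :=
      Filter.tendsto_comap.mono_left inf_le_left
    have hre : ∀ᶠ z : ℍ in cuspStrip, |z.re| ≤ 1 :=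
      Filter.mem_inf_of_right (Filter.mem_principal_self _)
    filter_upwards [him.eventually (Filter.eventually_ge_atTop 1), hre] with z hz1 hz2 p
    rw [norm_mul]
    calc _ ≤ 1 * ‖((p.1 : ℂ) * z + (p.2 : ℂ)) ^ (-k)‖ := by gcongr; exact hb p
      _ ≤ u p := by rw [one_mul]; exact hbd z hz2 hz1 p

/-! ### Quadratic characters and the Eisenstein series at the cusp `∞_r` -/

namespace IsQuadDirChar

variable {N : ℕ} {χ : ℤ → ℂ}

theorem congr (h : IsQuadDirChar N χ) {a b : ℤ} (hab : a ≡ b [ZMOD N]) : χ a = χ b := by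
  obtain ⟨t, ht⟩ := hab.dvd
  have hn : ∀ (n : ℕ) (a : ℤ), χ (a + n * N) = χ a := by
    intro n
    induction n with
    | zero => simp
    | succ n ih =>
      intro a
      rw [← ih a, ← h.periodic (a + n * N)]
      congr 1
      push_cast
      ring
  have hb : b = a + t * N := by linear_combination ht
  rw [hb]
  obtain ⟨n, rfl | rfl⟩ := t.eq_nat_or_neg
  · exact (hn n a).symm
  · rw [← hn n (a + -n * N)]
    congr 1
    ring

theorem sq_eq_one (h : IsQuadDirChar N χ) {a : ℤ} (ha : IsCoprime a (N : ℤ)) : χ a * χ a = 1 := by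
  rcases h.sq_vals a with h0 | h0 | h0
  · exact absurd ha ((h.eq_zero_iff a).mp h0)
  · simp [h0]
  · simp [h0]

theorem map_one (h : IsQuadDirChar N χ) : χ 1 = 1 := by
  have h1 := h.mul 1 1
  rw [mul_one] at h1
  rw [h1]
  exact h.sq_eq_one isCoprime_one_left

theorem norm_le_one (h : IsQuadDirChar N χ) (a : ℤ) : ‖χ a‖ ≤ 1 := by
  rcases h.sq_vals a with h0 | h0 | h0 <;> simp [h0]

theorem ne_zero_iff (h : IsQuadDirChar N χ) (a : ℤ) : χ a ≠ 0 ↔ IsCoprime a (N : ℤ) := by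
  rw [Ne, h.eq_zero_iff, not_not]

/-- A quadratic character takes the same value at `a` and at its inverse. -/
theorem eq_of_mul_modEq_one (h : IsQuadDirChar N χ) {a b : ℤ} (hab : a * b ≡ 1 [ZMOD N]) :
    χ a = χ b := by
  have h1 : χ a * χ b = 1 := by rw [← h.mul, h.congr hab, h.map_one]
  rcases h.sq_vals a with h0 | h0 | h0 <;> rcases h.sq_vals b with h2 | h2 | h2 <;>
    simp_all

/-- For coprime `r` and `s`, the `r`-component of a quadratic character modulo `r s` is a quadratic
character modulo `r`; the second part records the defining relation with `χ`. -/
theorem component {r s : ℕ} (h : IsQuadDirChar (r * s) χ) (hrs : IsCoprime (r : ℤ) (s : ℤ))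
    {χr : ℤ → ℂ}
    (hχr : ∀ x y : ℤ, Int.ModEq (r : ℤ) y x → Int.ModEq (s : ℤ) y 1 → χr x = χ y) :
    IsQuadDirChar r χr ∧ ∀ x, ∃ y, y ≡ x [ZMOD r] ∧ y ≡ 1 [ZMOD s] ∧ χr x = χ y := by
  have hex : ∀ x, ∃ y, y ≡ x [ZMOD r] ∧ y ≡ 1 [ZMOD s] ∧ χr x = χ y := by
    intro x
    obtain ⟨u, v, huv⟩ := hrs
    have h1 : v * s * x + u * r ≡ x [ZMOD r] :=
      (Int.modEq_iff_dvd.mpr ⟨u * x - u, by linear_combination -x * huv⟩)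
    have h2 : v * s * x + u * r ≡ 1 [ZMOD s] :=
      (Int.modEq_iff_dvd.mpr ⟨v - v * x, by linear_combination -huv⟩)
    exact ⟨_, h1, h2, hχr _ _ h1 h2⟩
  refine ⟨⟨?_, ?_, ?_, ?_⟩, hex⟩
  · intro a
    obtain ⟨y, h1, h2, h3⟩ := hex a
    rw [h3]
    exact hχr _ _ (h1.trans (by simp [Int.ModEq])) h2
  · intro a b
    obtain ⟨y, h1, h2, h3⟩ := hex a
    obtain ⟨y', h1', h2', h3'⟩ := hex b
    rw [h3, h3', ← h.mul]
    exact hχr _ _ (h1.mul h1') (by simpa using h2.mul h2')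
  · intro a
    obtain ⟨y, h1, h2, h3⟩ := hex a
    rw [h3, h.eq_zero_iff, not_iff_not]
    push_cast
    rw [IsCoprime.mul_right_iff]
    have hs : IsCoprime y (s : ℤ) := by
      obtain ⟨t, ht⟩ := h2.dvd
      exact ⟨1, t, by linear_combination -ht⟩
    rw [and_iff_left hs]
    obtain ⟨t, ht⟩ := h1.dvd
    have : a = y + r * t := by linear_combination ht
    rw [this, IsCoprime.add_mul_left_left_iff]
  · intro a
    obtain ⟨y, h1, h2, h3⟩ := hex a
    rw [h3]
    exact h.sq_vals y

theorem eq_mul_components {r s : ℕ} (h : IsQuadDirChar (r * s) χ)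
    (hrs : IsCoprime (r : ℤ) (s : ℤ)) {χr χs : ℤ → ℂ}
    (hχr : ∀ x y : ℤ, Int.ModEq (r : ℤ) y x → Int.ModEq (s : ℤ) y 1 → χr x = χ y)
    (hχs : ∀ x y : ℤ, Int.ModEq (s : ℤ) y x → Int.ModEq (r : ℤ) y 1 → χs x = χ y) (x : ℤ) :
    χ x = χr x * χs x := by
  obtain ⟨y, h1, h2, h3⟩ := (h.component hrs hχr).2 x
  obtain ⟨y', h1', h2', h3'⟩ := ((mul_comm r s ▸ h : IsQuadDirChar (s * r) χ).component
    hrs.symm hχs).2 x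
  rw [h3, h3', ← h.mul]
  refine h.congr ?_
  have e1 : x ≡ y * y' [ZMOD r] := by simpa using (h1.mul h2').symm
  have e2 : x ≡ y * y' [ZMOD s] := by simpa using (h2.mul h1').symm
  rw [Int.modEq_iff_dvd] at e1 e2 ⊢
  push_cast
  exact hrs.mul_dvd e1 e2

end IsQuadDirChar

theorem isCoprime_rowMul {a b c d : ℤ} (h : a * d - b * c = 1) (x y : ℤ) :
    IsCoprime (x * a + y * c) (x * b + y * d) ↔ IsCoprime x y := by
  constructor
  · rintro ⟨u, v, huv⟩
    exact ⟨u * a + v * b, u * c + v * d, by linear_combination huv⟩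
  · rintro ⟨u, v, huv⟩
    exact ⟨u * d - v * b, v * a - u * c, by linear_combination huv + (u * x + v * y) * h⟩

open scoped Classical in
/-- The weight function of the Eisenstein series `E_r`: it is `χ_r(c) χ_s(d)` at the coprime pairs
`(c,d)` with `s ∣ c`, and `0` elsewhere. -/
def cuspWeight (s : ℕ) (χr χs : ℤ → ℂ) (p : ℤ × ℤ) : ℂ :=
  if IsCoprime p.1 p.2 ∧ (s : ℤ) ∣ p.1 then χr p.1 * χs p.2 else 0

section

variable {r s : ℕ} {χ χr χs : ℤ → ℂ}

theorem cuspWeight_norm_le (hr : IsQuadDirChar r χr) (hs : IsQuadDirChar s χs) (p : ℤ × ℤ) :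
    ‖cuspWeight s χr χs p‖ ≤ 1 := by
  unfold cuspWeight
  split_ifs
  · rw [norm_mul]
    exact mul_le_one₀ (hr.norm_le_one _) (norm_nonneg _) (hs.norm_le_one _)
  · simp

theorem cuspWeight_neg (hr : IsQuadDirChar r χr) (hs : IsQuadDirChar s χs)
    (hχ : ∀ x, χ x = χr x * χs x) (x y : ℤ) :
    cuspWeight s χr χs (-x, -y) = χ (-1) * cuspWeight s χr χs (x, y) := by
  unfold cuspWeight
  simp only [IsCoprime.neg_neg_iff, dvd_neg]
  split_ifs
  · rw [← neg_one_mul x, ← neg_one_mul y, hr.mul, hs.mul, hχ]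
    ring
  · simp

/-- The weight function transforms under `Γ₀(r s)` by the character `χ`. -/
theorem cuspWeight_Gamma0 (hr : IsQuadDirChar r χr) (hs : IsQuadDirChar s χs)
    (hχ : ∀ x, χ x = χr x * χs x) {a b c d : ℤ} (hdet : a * d - b * c = 1)
    (hc : ((r * s : ℕ) : ℤ) ∣ c) (x y : ℤ) :
    cuspWeight s χr χs (x * d - y * c, y * a - x * b) = χ d * cuspWeight s χr χs (x, y) := by
  obtain ⟨t, rfl⟩ := hc
  push_cast at *
  unfold cuspWeight
  have h1 : IsCoprime (x * d - y * (r * s * t)) (y * a - x * b) ↔ IsCoprime x y := by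
    have := isCoprime_rowMul (a := d) (b := -b) (c := -(r * s * t)) (d := a)
      (by linear_combination hdet) x y
    rw [← this]
    ring_nf
  have h2 : (s : ℤ) ∣ x * d - y * (r * s * t) ↔ (s : ℤ) ∣ x := by
    have hsd : IsCoprime (s : ℤ) d := ⟨-(b * r * t), a, by linear_combination hdet⟩
    rw [dvd_sub_left ⟨y * r * t, by ring⟩]
    exact ⟨fun h => hsd.dvd_of_dvd_mul_right h, fun h => h.mul_right d⟩
  simp only [h1, h2]
  split_ifs with h
  · obtain ⟨u, hu⟩ := h.2
    have e1 : χr (x * d - y * (r * s * t)) = χr x * χr d := by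
      rw [← hr.mul]
      exact hr.congr (Int.modEq_iff_dvd.mpr ⟨y * s * t, by ring⟩)
    have e2 : χs (y * a - x * b) = χs y * χs a := by
      rw [← hs.mul]
      exact hs.congr (Int.modEq_iff_dvd.mpr ⟨u * b, by rw [hu]; ring⟩)
    have e3 : χs a = χs d := hs.eq_of_mul_modEq_one
      (Int.modEq_iff_dvd.mpr ⟨-(b * r * t), by linear_combination -hdet⟩)
    rw [e1, e2, e3, hχ]
    ring
  · simp

open scoped Classical in
/-- Multiplication by the Atkin–Lehner matrix, with the common factor `r` removed, carries the
weight function of `E` to `cuspWeight`, up to the normalizing sign `χ_r(-β) χ_s(αr)`. -/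
theorem cuspWeight_AtkinLehner (hr : IsQuadDirChar r χr) (hs : IsQuadDirChar s χs)
    (hχ : ∀ x, χ x = χr x * χs x) {α β γ δ : ℤ}
    (hdet : (r : ℤ) * α * δ - (s : ℤ) * β * γ = 1) (c d : ℤ) :
    χr (-β) * χs (α * r) *
      (if IsCoprime (((r * s : ℕ) : ℤ) * c) d ∧ ((r * s : ℕ) : ℤ) ∣ ((r * s : ℕ) : ℤ) * c
        then χ d else 0) =
    cuspWeight s χr χs (s * (c * (r * α) + d * γ), c * (s * β) + d * δ) := by
  set x := c * (r * α) + d * γ with hx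
  set y := c * (s * β) + d * δ with hy
  have hd : d = -(s * β * x) + r * α * y := by
    rw [hx, hy]; linear_combination -d * hdet
  have hβ : IsCoprime (-β) (r : ℤ) := ⟨s * γ, α * δ, by linear_combination hdet⟩
  have hα : IsCoprime (α * r) (s : ℤ) := ⟨δ, -(β * γ), by linear_combination hdet⟩
  have key : χr (-β) * χs (α * r) * χ d = χr (s * x) * χs y := by
    have e1 : χr d = χr (-β) * χr (s * x) := by
      rw [← hr.mul]
      exact hr.congr (Int.modEq_iff_dvd.mpr ⟨-(α * y), by rw [hd]; ring⟩)
    have e2 : χs d = χs (α * r) * χs y := by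
      rw [← hs.mul]
      exact hs.congr (Int.modEq_iff_dvd.mpr ⟨β * x, by rw [hd]; ring⟩)
    rw [hχ, e1, e2]
    linear_combination (χr (s * x) * χs y * χs (α * r) * χs (α * r)) * hr.sq_eq_one hβ +
      (χr (s * x) * χs y) * hs.sq_eq_one hα
  have hnz : χr (-β) * χs (α * r) ≠ 0 :=
    mul_ne_zero ((hr.ne_zero_iff _).mpr hβ) ((hs.ne_zero_iff _).mpr hα)
  unfold cuspWeight
  simp only [dvd_mul_right, and_true]
  by_cases h0 : χ d = 0
  · rw [h0, mul_zero] at key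
    simp [h0, ← key]
  · have hdr : IsCoprime d (r : ℤ) := by
      rw [hχ] at h0
      exact (hr.ne_zero_iff _).mp (left_ne_zero_of_mul h0)
    have hds : IsCoprime d (s : ℤ) := by
      rw [hχ] at h0
      exact (hs.ne_zero_iff _).mp (right_ne_zero_of_mul h0)
    have hys : IsCoprime y (s : ℤ) :=
      (hs.ne_zero_iff _).mp (right_ne_zero_of_mul (key ▸ mul_ne_zero hnz h0))
    have e1 : IsCoprime (((r * s : ℕ) : ℤ) * c) d ↔ IsCoprime c d := by
      push_cast
      rw [IsCoprime.mul_left_iff, IsCoprime.mul_left_iff]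
      exact and_iff_right ⟨hdr.symm, hds.symm⟩
    have e2 : IsCoprime (s * x) y ↔ IsCoprime c d := by
      rw [IsCoprime.mul_left_iff, and_iff_right hys.symm]
      exact isCoprime_rowMul (by linear_combination hdet) c d
    simp only [e1, e2]
    split_ifs
    · exact key
    · simp

end

/-- The normalized Eisenstein series `E_r` as a lattice sum. -/
theorem slash_Eser_eq {r s : ℕ} {χ χr χs : ℤ → ℂ} (hr0 : 0 < r) (hs0 : 0 < s)
    (hr : IsQuadDirChar r χr) (hs : IsQuadDirChar s χs)
    (hχ : ∀ x, χ x = χr x * χs x) {α β γ δ : ℤ}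
    (hdet : (r : ℤ) * α * δ - (s : ℤ) * β * γ = 1) (k : ℤ) {τ : ℂ} (hτ : τ ∈ UHP) :
    χr (-β) * χs (α * (r : ℤ)) *
      slash k !![(r : ℝ) * (α : ℝ), (β : ℝ); ((r * s : ℕ) : ℝ) * (γ : ℝ), (r : ℝ) * (δ : ℝ)]
        (Eser (r * s) χ k) τ =
      (√(r : ℝ) : ℂ) ^ (-k) * (1 / 2) * latSum k (cuspWeight s χr χs) τ := by
  classical
  have hdetR : ((r : ℝ) * α * δ - (s : ℝ) * β * γ) = 1 := by exact_mod_cast hdet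
  have hdetC : ((r : ℂ) * α * δ - (s : ℂ) * β * γ) = 1 := by exact_mod_cast hdet
  have hD : (!![(r : ℝ) * (α : ℝ), (β : ℝ); ((r * s : ℕ) : ℝ) * (γ : ℝ), (r : ℝ) * (δ : ℝ)]).det
      = r := by
    rw [Matrix.det_fin_two_of]
    push_cast
    linear_combination (r : ℝ) * hdetR
  have hr0C : (r : ℂ) ≠ 0 := by exact_mod_cast hr0.ne'
  have hsq : (√(r : ℝ) : ℂ) ≠ 0 := by
    exact_mod_cast (Real.sqrt_pos.mpr (by exact_mod_cast hr0 : (0 : ℝ) < r)).ne'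
  have hsq2 : (√(r : ℝ) : ℂ) * √(r : ℝ) = r := by
    exact_mod_cast Real.mul_self_sqrt (by positivity : (0 : ℝ) ≤ r)
  have hden : ((r * s : ℕ) : ℂ) * γ * τ + r * δ ≠ 0 := by
    intro h
    have him := congrArg Complex.im h
    have hre := congrArg Complex.re h
    have e : ((r * s : ℕ) : ℂ) * γ * τ + r * δ =
      (((r * s : ℕ) : ℝ) * (γ : ℝ) : ℝ) * τ + (((r : ℝ) * (δ : ℝ) : ℝ) : ℂ) := by push_cast; ring
    rw [e] at him hre
    simp only [Complex.add_im, Complex.im_ofReal_mul, Complex.ofReal_im, add_zero,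
      Complex.zero_im, mul_eq_zero, (ne_of_gt hτ : τ.im ≠ 0), or_false] at him
    simp only [Complex.add_re, Complex.re_ofReal_mul, Complex.ofReal_re, Complex.zero_re] at hre
    have hrR : (r : ℝ) ≠ 0 := by exact_mod_cast hr0.ne'
    have hsR : (s : ℝ) ≠ 0 := by exact_mod_cast hs0.ne'
    have hγ : (γ : ℝ) = 0 := by
      rcases him with h1 | h1
      · exact absurd h1 (by push_cast; exact mul_ne_zero hrR hsR)
      · exact h1
    rw [hγ] at hre hdetR
    have hδ : (δ : ℝ) = 0 := by simpa [hrR] using hre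
    rw [hδ] at hdetR
    simp at hdetR
  have hslash : slash k !![(r : ℝ) * (α : ℝ), (β : ℝ); ((r * s : ℕ) : ℝ) * (γ : ℝ),
        (r : ℝ) * (δ : ℝ)] (Eser (r * s) χ k) τ =
      (√(r : ℝ) : ℂ) ^ k * (((r * s : ℕ) : ℂ) * γ * τ + r * δ) ^ (-k) *
        Eser (r * s) χ k ((r * α * τ + β) / (((r * s : ℕ) : ℂ) * γ * τ + r * δ)) := by
    unfold slash
    rw [hD]
    simp
  rw [hslash]
  set Q := ((r * s : ℕ) : ℂ) * γ * τ + r * δ with hQ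
  have hE : Q ^ (-k) * Eser (r * s) χ k ((r * α * τ + β) / Q) = (1 / 2 : ℂ) * ∑' p : ℤ × ℤ,
      (if IsCoprime (((r * s : ℕ) : ℤ) * p.1) p.2 ∧ ((r * s : ℕ) : ℤ) ∣ ((r * s : ℕ) : ℤ) * p.1
        then χ p.2 else 0) *
      ((((r * s : ℕ) : ℂ) * p.1) * (r * α * τ + β) + p.2 * Q) ^ (-k) := by
    unfold Eser
    rw [mul_left_comm, ← tsum_mul_left]
    congr 1
    have hinj : Function.Injective fun p : ℤ × ℤ => (((r * s : ℕ) : ℤ) * p.1, p.2) := by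
      intro p q hpq
      simp only [Prod.mk.injEq] at hpq
      have : ((r * s : ℕ) : ℤ) ≠ 0 := by exact_mod_cast (Nat.mul_pos hr0 hs0).ne'
      exact Prod.ext (mul_left_cancel₀ this hpq.1) hpq.2
    rw [← hinj.tsum_eq]
    · refine tsum_congr fun p => ?_
      simp only
      split_ifs
      · rw [mul_left_comm, ← mul_zpow]
        congr 2
        push_cast
        rw [mul_add, ← mul_assoc, mul_comm Q, mul_assoc, mul_comm Q, div_mul_cancel₀ _ hden]
        ring
      · simp
    · intro p hp
      rw [Function.mem_support] at hp
      have h1 : IsCoprime p.1 p.2 ∧ ((r * s : ℕ) : ℤ) ∣ p.1 := by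
        by_contra hcon
        exact hp (by rw [if_neg hcon, mul_zero])
      obtain ⟨t, ht⟩ := h1.2
      exact ⟨(t, p.2), Prod.ext ht.symm rfl⟩
  have hL : latSum k (cuspWeight s χr χs) τ = ∑' p : ℤ × ℤ,
      cuspWeight s χr χs (s * (p.1 * (r * α) + p.2 * γ), p.1 * (s * β) + p.2 * δ) *
      ((s * (p.1 * (r * α) + p.2 * γ)) * τ + (p.1 * (s * β) + p.2 * δ)) ^ (-k) := by
    unfold latSum
    have hinj : Function.Injective fun p : ℤ × ℤ => ((s : ℤ) * p.1, p.2) := by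
      intro p q hpq
      simp only [Prod.mk.injEq] at hpq
      have : (s : ℤ) ≠ 0 := by exact_mod_cast hs0.ne'
      exact Prod.ext (mul_left_cancel₀ this hpq.1) hpq.2
    rw [← hinj.tsum_eq]
    · rw [← (rowMul (r * α) (s * β) γ δ (by linear_combination hdet)).tsum_eq]
      refine tsum_congr fun p => ?_
      simp only [rowMul, Equiv.coe_fn_mk]
      push_cast
      rfl
    · intro p hp
      rw [Function.mem_support] at hp
      have h1 : IsCoprime p.1 p.2 ∧ (s : ℤ) ∣ p.1 := by
        by_contra hcon
        exact hp (by rw [cuspWeight, if_neg hcon, zero_mul])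
      obtain ⟨t, ht⟩ := h1.2
      exact ⟨(t, p.2), Prod.ext ht.symm rfl⟩
  rw [mul_assoc ((√(r : ℝ) : ℂ) ^ k), hE, hL, ← tsum_mul_left, ← tsum_mul_left, ← tsum_mul_left,
    ← tsum_mul_left]
  refine tsum_congr fun p => ?_
  rw [← cuspWeight_AtkinLehner hr hs hχ hdet]
  have e1 : ((((r * s : ℕ) : ℂ) * p.1) * (r * α * τ + β) + p.2 * Q) =
      (√(r : ℝ) : ℂ) * (√(r : ℝ) : ℂ) *
        ((s * (p.1 * (r * α) + p.2 * γ)) * τ + (p.1 * (s * β) + p.2 * δ)) := by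
    rw [hsq2, hQ]
    push_cast
    ring
  rw [e1, mul_zpow, mul_zpow]
  have e2 : (√(r : ℝ) : ℂ) ^ k * (√(r : ℝ) : ℂ) ^ (-k) = 1 := by
    rw [← zpow_add₀ hsq, add_neg_cancel, zpow_zero]
  generalize (√(r : ℝ) : ℂ) ^ k = A at *
  generalize (√(r : ℝ) : ℂ) ^ (-k) = B at *
  generalize (if IsCoprime (((r * s : ℕ) : ℤ) * p.1) p.2 ∧
    ((r * s : ℕ) : ℤ) ∣ ((r * s : ℕ) : ℤ) * p.1 then χ p.2 else 0) = X at *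
  generalize ((s * (p.1 * (r * α) + p.2 * γ)) * τ + (p.1 * (s * β) + p.2 * δ) : ℂ) ^ (-k) = Y at *
  linear_combination (χr (-β) * χs (α * r) * (1 / 2) * X * B * Y) * e2

/-! ### Translates by `SL₂(ℤ)` and the cosets over the cusp `∞_r` -/

/-- On `SL₂(ℤ)`, `slash` agrees with the slash action of Mathlib. -/
theorem SL_slash_eq_slash (w : ℤ) (f : ℂ → ℂ) (g : SL(2, ℤ)) (z : ℍ) :
    ((fun z : ℍ => f z) ∣[w] g) z = slash w (matR g) f z := by
  have hd : (matR g).det = 1 := by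
    have := SL_det_eq g
    rw [Matrix.det_fin_two]
    simp only [matR, Matrix.map_apply]
    exact_mod_cast this
  rw [ModularForm.SL_slash_apply, denom_SL, coe_SL_smul, slash, hd]
  simp [matR, mul_comm]

section

variable {r s : ℕ} {χ χr χs : ℤ → ℂ}

/-- The value at `i∞` of the translate of the lattice sum by `g`; the argument of the weight
function is the row vector `(0,1) g⁻¹`. -/
theorem latSum_slash_tendsto {k : ℤ} (hk : 3 ≤ k) (hr : IsQuadDirChar r χr)
    (hs : IsQuadDirChar s χs) (hχ : ∀ x, χ x = χr x * χs x) (hpar : χ (-1) = (-1) ^ k)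
    (g : SL(2, ℤ)) :
    Filter.Tendsto ((fun z : ℍ => latSum k (cuspWeight s χr χs) z) ∣[k] g) cuspStrip
      (𝓝 (2 * cuspWeight s χr χs (-g 1 0, g 0 0))) := by
  rw [latSum_slash]
  have hdet := SL_det_eq g
  have key := latSum_tendsto hk (ψ := fun p =>
    cuspWeight s χr χs (p.1 * g 1 1 - p.2 * g 1 0, p.2 * g 0 0 - p.1 * g 0 1))
    (fun p => cuspWeight_norm_le hr hs _) ?_ ?_
  · simpa using key
  · intro p hp
    refine if_neg fun h => hp ?_
    rw [← isCoprime_rowMul (a := g 1 1) (b := -g 0 1) (c := -g 1 0) (d := g 0 0)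
      (by linear_combination hdet)]
    convert h.1 using 1 <;> ring
  · have := cuspWeight_neg hr hs hχ (-g 1 0) (g 0 0)
    rw [hpar] at this
    simpa using this

theorem latSum_slash_Gamma0 (k : ℤ) (hr : IsQuadDirChar r χr)
    (hs : IsQuadDirChar s χs) (hχ : ∀ x, χ x = χr x * χs x) (g : SL(2, ℤ))
    (hg : ((r * s : ℕ) : ℤ) ∣ g 1 0) (z : ℍ) :
    ((fun z : ℍ => latSum k (cuspWeight s χr χs) z) ∣[k] g) z =
      χ (g 1 1) * latSum k (cuspWeight s χr χs) z := by
  rw [latSum_slash]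
  unfold latSum
  rw [← tsum_mul_left]
  refine tsum_congr fun p => ?_
  beta_reduce
  rw [cuspWeight_Gamma0 hr hs hχ (SL_det_eq g) hg, mul_assoc]

/-- The matrix `V_j = [[α, αj+β], [sγ, sγj+rδ]]` of determinant one. It equals
`W_r [[1,j],[0,r]] / r`, so that it carries `∞` to the cusp `∞_r`. -/
def cuspRep (r s : ℕ) (α β γ δ : ℤ) (hdet : (r : ℤ) * α * δ - (s : ℤ) * β * γ = 1) (j : ℤ) :
    SL(2, ℤ) :=
  ⟨!![α, α * j + β; s * γ, s * γ * j + r * δ], by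
    rw [Matrix.det_fin_two_of]; linear_combination hdet⟩

variable {α β γ δ : ℤ} (hdet : (r : ℤ) * α * δ - (s : ℤ) * β * γ = 1)

theorem mul_inv_mem_Gamma0 (g h : SL(2, ℤ)) (N : ℕ) :
    g * h⁻¹ ∈ CongruenceSubgroup.Gamma0 N ↔ (N : ℤ) ∣ g 1 0 * h 1 1 - g 1 1 * h 1 0 := by
  rw [CongruenceSubgroup.Gamma0_mem, ZMod.intCast_zmod_eq_zero_iff_dvd]
  have : (g * h⁻¹) 1 0 = g 1 0 * h 1 1 - g 1 1 * h 1 0 := by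
    rw [Matrix.SpecialLinearGroup.coe_mul, Matrix.mul_apply, Fin.sum_univ_two,
      Matrix.SpecialLinearGroup.SL2_inv_expl]
    simp
    ring
  rw [this]

theorem isCoprime_gamma (hdet : (r : ℤ) * α * δ - (s : ℤ) * β * γ = 1) : IsCoprime ((s : ℤ) * γ) (r : ℤ) :=
  ⟨-β, α * δ, by linear_combination hdet⟩

/-- The matrices whose lower-left entry is divisible by `s` and prime to `r` lie in some
`Γ₀(r s) V_j`: the condition on `j` is a linear congruence modulo `r` with invertible leading
coefficient. -/
theorem exists_cuspRep (hr0 : 0 < r) (g : SL(2, ℤ)) (hs : (s : ℤ) ∣ g 1 0)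
    (hr : IsCoprime (g 1 0) (r : ℤ)) :
    ∃ j : Fin r, g * (cuspRep r s α β γ δ hdet (j : ℕ))⁻¹ ∈
      CongruenceSubgroup.Gamma0 (r * s) := by
  obtain ⟨c, hc⟩ := hs
  have h1 : IsCoprime (c * (s * γ)) (r : ℤ) := by
    refine IsCoprime.mul_left ?_ (isCoprime_gamma hdet)
    rw [hc] at hr
    exact hr.of_mul_left_right
  obtain ⟨u, v, huv⟩ := h1
  have hr0' : (r : ℤ) ≠ 0 := by exact_mod_cast hr0.ne'
  set J : ℤ := u * (g 1 1 * γ) with hJ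
  have hlt : (J % r).toNat < r := by
    have h1 := Int.emod_nonneg J hr0'
    have h2 := Int.emod_lt_of_pos J (by exact_mod_cast hr0 : (0 : ℤ) < r)
    omega
  refine ⟨⟨_, hlt⟩, ?_⟩
  rw [mul_inv_mem_Gamma0]
  have e : (((J % r).toNat : ℕ) : ℤ) = J - r * (J / r) := by
    rw [Int.toNat_of_nonneg (Int.emod_nonneg J hr0'), Int.emod_def]
  simp only [cuspRep, Matrix.SpecialLinearGroup.coe_mk, Matrix.of_apply, Matrix.cons_val', Matrix.cons_val_zero,
    Matrix.cons_val_one, Matrix.cons_val_fin_one]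
  rw [e, hc, hJ]
  refine ⟨c * δ - v * (g 1 1 * γ) - c * (s * γ) * (J / r), ?_⟩
  push_cast
  linear_combination (s * g 1 1 * γ) * huv

theorem cuspRep_injective (hs0 : 0 < s) (i j : Fin r)
    (h : cuspRep r s α β γ δ hdet (i : ℕ) * (cuspRep r s α β γ δ hdet (j : ℕ))⁻¹ ∈
      CongruenceSubgroup.Gamma0 (r * s)) : i = j := by
  rw [mul_inv_mem_Gamma0] at h
  simp only [cuspRep, Matrix.SpecialLinearGroup.coe_mk, Matrix.of_apply, Matrix.cons_val', Matrix.cons_val_zero,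
    Matrix.cons_val_one, Matrix.cons_val_fin_one] at h
  have hs0' : (s : ℤ) ≠ 0 := by exact_mod_cast hs0.ne'
  have h2 : (r : ℤ) ∣ (s * γ) * (γ * ((j : ℕ) - (i : ℕ) : ℤ)) := by
    obtain ⟨t, ht⟩ := h
    refine ⟨t, mul_left_cancel₀ hs0' ?_⟩
    push_cast at ht
    linear_combination ht
  have hco := isCoprime_gamma hdet
  have h3 := hco.symm.dvd_of_dvd_mul_left h2
  have h4 := hco.of_mul_left_right.symm.dvd_of_dvd_mul_left h3
  have h5 := Int.eq_zero_of_abs_lt_dvd h4 (by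
    have := i.2
    have := j.2
    rw [abs_lt]
    constructor <;> omega)
  ext
  omega

theorem not_dvd_cuspRep (hr1 : 1 < r) (j : ℤ) :
    ¬ ((r * s : ℕ) : ℤ) ∣ cuspRep r s α β γ δ hdet j 1 0 := by
  intro h
  change ((r * s : ℕ) : ℤ) ∣ s * γ at h
  have h1 : (r : ℤ) ∣ s * γ := (Dvd.intro _ (by push_cast; rfl)).trans h
  have h2 := (isCoprime_gamma hdet).symm.isUnit_of_dvd' dvd_rfl h1
  rw [Int.ofNat_isUnit, Nat.isUnit_iff] at h2
  omega

/-- The translate of `f` by `V_j` in terms of the translate by `W_r`, from `V_j τ = W_r ((τ+j)/r)`. -/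
theorem slash_cuspRep (hr0 : 0 < r) (w : ℤ) (f : ℂ → ℂ) (j : ℤ) (z : ℂ) :
    slash w (matR (cuspRep r s α β γ δ hdet j)) f z = (√(r : ℝ) : ℂ) ^ (-w) *
      slash w !![(r : ℝ) * (α : ℝ), (β : ℝ); ((r * s : ℕ) : ℝ) * (γ : ℝ), (r : ℝ) * (δ : ℝ)] f
        ((z + j) / r) := by
  have hdetR : ((r : ℝ) * α * δ - (s : ℝ) * β * γ) = 1 := by exact_mod_cast hdet
  have hD : (!![(r : ℝ) * (α : ℝ), (β : ℝ); ((r * s : ℕ) : ℝ) * (γ : ℝ), (r : ℝ) * (δ : ℝ)]).det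
      = r := by
    rw [Matrix.det_fin_two_of]
    push_cast
    linear_combination (r : ℝ) * hdetR
  have hD' : (matR (cuspRep r s α β γ δ hdet j)).det = 1 := by
    rw [Matrix.det_fin_two]
    simp only [matR, Matrix.map_apply, cuspRep, Matrix.SpecialLinearGroup.coe_mk, Matrix.of_apply,
      Matrix.cons_val', Matrix.cons_val_zero, Matrix.cons_val_one, Matrix.cons_val_fin_one]
    push_cast
    linear_combination hdetR
  have hr0C : (r : ℂ) ≠ 0 := by exact_mod_cast hr0.ne'
  have hsq : (√(r : ℝ) : ℂ) ≠ 0 := by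
    exact_mod_cast (Real.sqrt_pos.mpr (by exact_mod_cast hr0 : (0 : ℝ) < r)).ne'
  have e2 : (√(r : ℝ) : ℂ) ^ (-w) * (√(r : ℝ) : ℂ) ^ w = 1 := by
    rw [← zpow_add₀ hsq, neg_add_cancel, zpow_zero]
  unfold slash
  rw [hD, hD', ← mul_assoc, ← mul_assoc, e2]
  have en : ((r : ℝ) * (α : ℝ) : ℂ) * ((z + j) / r) + β = α * z + (α * j + β) := by
    push_cast
    field_simp
    ring
  have ed : (((r * s : ℕ) : ℝ) * (γ : ℝ) : ℂ) * ((z + j) / r) + (r : ℝ) * (δ : ℝ) =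
      s * γ * z + (s * γ * j + r * δ) := by
    push_cast
    field_simp
    ring
  simp only [matR, Matrix.map_apply, cuspRep, Matrix.SpecialLinearGroup.coe_mk, Matrix.of_apply,
    Matrix.cons_val', Matrix.cons_val_zero, Matrix.cons_val_one, Matrix.cons_val_fin_one]
  push_cast at en ed ⊢
  rw [en, ed]
  simp

end

/-! ### Limits at the cusps -/

theorem mdiff_of_differentiableOn {f : ℂ → ℂ} (hf : DifferentiableOn ℂ f UHP) :
    MDiff (fun z : ℍ => f z) := by
  rw [mdifferentiable_iff]
  refine hf.congr fun z hz => ?_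
  simp [ofComplex_apply_of_im_pos hz]

theorem slash_out_mk {Γ : Subgroup SL(2, ℤ)} {h : ℍ → ℂ} (hinv : ∀ g ∈ Γ, h ∣[(2 : ℤ)] g = h)
    (g : SL(2, ℤ)) : h ∣[(2 : ℤ)] ((g⁻¹ : SL(2, ℤ)) : SL(2, ℤ) ⧸ Γ).out⁻¹ = h ∣[(2 : ℤ)] g := by
  obtain ⟨γ, hγ⟩ := QuotientGroup.mk_out_eq_mul Γ g⁻¹
  rw [hγ, mul_inv_rev, SlashAction.slash_mul, hinv _ (inv_mem γ.2), inv_inv]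

/-- The residue theorem in limit form: for a weight `2` form, the limits of the periods at the
various cosets add up to `0`. -/
theorem sum_limits_eq_zero {Γ : Subgroup SL(2, ℤ)} [Fintype (SL(2, ℤ) ⧸ Γ)] {h : ℍ → ℂ}
    (hh : MDiff h) (hinv : ∀ g ∈ Γ, h ∣[(2 : ℤ)] g = h) {L : SL(2, ℤ) ⧸ Γ → ℂ}
    (hL : ∀ q, Filter.Tendsto (period (h ∣[(2 : ℤ)] q.out⁻¹)) Filter.atTop (𝓝 (L q))) :
    ∑ q, L q = 0 := by
  refine tendsto_nhds_unique (tendsto_finsetSum Finset.univ fun q _ => hL q) ?_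
  refine tendsto_const_nhds.congr' ?_
  filter_upwards [Filter.eventually_gt_atTop 0] with y hy
  exact (trace_period_eq_zero Γ hh hinv hy).symm

section

variable {r s : ℕ} {χr χs : ℤ → ℂ} {α β γ δ : ℤ}
  (hdet : (r : ℤ) * α * δ - (s : ℤ) * β * γ = 1)

/-- The value of `f ∣[w] V_j` at `i∞` is the constant term of `f` at the cusp `∞_r`, suitably
scaled. Boundedness of `f` at that cusp is what excludes a principal part, and it is available only
because `r > 1`. -/
theorem tendsto_slash_cuspRep (hr1 : 1 < r) {w : ℤ} {f : ℂ → ℂ} {cr : ℤ → ℂ} {ε : ℂ}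
    (hε : ε * ε = 1)
    (hcr : HasQExp (fun τ => ε * slash w !![(r : ℝ) * (α : ℝ), (β : ℝ);
      ((r * s : ℕ) : ℝ) * (γ : ℝ), (r : ℝ) * (δ : ℝ)] f τ) cr)
    (hbd : ∀ g : SL(2, ℤ), ¬ ((r * s : ℕ) : ℤ) ∣ g 1 0 →
      ∃ C : ℝ, ∀ τ : ℂ, 1 ≤ τ.im → ‖slash w (matR g) f τ‖ ≤ C) (j : ℤ) :
    Filter.Tendsto ((fun z : ℍ => f z) ∣[w] cuspRep r s α β γ δ hdet j) cuspStrip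
      (𝓝 ((√(r : ℝ) : ℂ) ^ (-w) * (ε * cr 0))) := by
  have hr0 : 0 < r := by omega
  have hr0C : (r : ℂ) ≠ 0 := by exact_mod_cast hr0.ne'
  have hsq : (√(r : ℝ) : ℂ) ≠ 0 := by
    exact_mod_cast (Real.sqrt_pos.mpr (by exact_mod_cast hr0 : (0 : ℝ) < r)).ne'
  have hneg : ∀ m < 0, cr m = 0 := by
    intro m hm
    obtain ⟨C, hC⟩ := hbd _ (not_dvd_cuspRep hdet hr1 0)
    refine hcr.coeff_eq_zero_of_bounded (C := ‖ε‖ * (‖(√(r : ℝ) : ℂ) ^ w‖ * C)) ?_ hm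
    intro τ hτ
    have h1 := slash_cuspRep hdet hr0 w f 0 (r * τ)
    have h2 := hC (r * τ) (by
      have : (1 : ℝ) ≤ r := by exact_mod_cast hr0
      simp only [Complex.mul_im, Complex.natCast_re, Complex.natCast_im, zero_mul, add_zero]
      nlinarith)
    rw [Int.cast_zero, add_zero, mul_div_cancel_left₀ _ hr0C] at h1
    have e2 : (√(r : ℝ) : ℂ) ^ w * (√(r : ℝ) : ℂ) ^ (-w) = 1 := by
      rw [← zpow_add₀ hsq, add_neg_cancel, zpow_zero]
    have h3 := congrArg (fun x => (√(r : ℝ) : ℂ) ^ w * x) h1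
    simp only [← mul_assoc, e2, one_mul] at h3
    rw [← h3, norm_mul, norm_mul]
    gcongr
  have hmove : Filter.Tendsto (fun z : ℍ => ((z : ℂ) + j) / r) cuspStrip
      (Filter.comap Complex.im Filter.atTop) := by
    rw [Filter.tendsto_comap_iff]
    have h1 := Filter.tendsto_comap_iff.mp cuspStrip_le
    have h2 := h1.atTop_div_const (by exact_mod_cast hr0 : (0 : ℝ) < r)
    refine h2.congr fun z => ?_
    simp
  have h1 := (hcr.tendsto hneg).comp hmove
  refine (h1.const_mul ((√(r : ℝ) : ℂ) ^ (-w) * ε)).congr' ?_ |>.trans (le_of_eq ?_)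
  · refine Filter.Eventually.of_forall fun z => ?_
    rw [SL_slash_eq_slash, slash_cuspRep hdet hr0]
    simp only [Function.comp_apply]
    linear_combination ((√(r : ℝ) : ℂ) ^ (-w) * slash w !![(r : ℝ) * (α : ℝ), (β : ℝ);
      ((r * s : ℕ) : ℝ) * (γ : ℝ), (r : ℝ) * (δ : ℝ)] f (((z : ℂ) + j) / r)) * hε
  · rw [mul_assoc]

end

/-- An expansion indexed by `ℕ`, extended by zero to `ℤ`. -/
theorem hasQExp_of_nat {g : ℂ → ℂ} {e : ℕ → ℂ}
    (h : ∀ τ ∈ UHP, HasSum (fun m : ℕ => e m *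
      Complex.exp (2 * (Real.pi : ℂ) * Complex.I * m * τ)) (g τ)) :
    HasQExp g (fun m : ℤ => if 0 ≤ m then e m.toNat else 0) := by
  intro τ hτ
  rw [← (Nat.cast_injective (R := ℤ)).hasSum_iff]
  · convert h τ hτ using 2 with m
    simp [qexp]
  · intro m hm
    beta_reduce
    rw [if_neg, zero_mul]
    intro h0
    exact hm ⟨m.toNat, by simpa using h0⟩

/-! ### The pairing -/

/-- The constant term of `f ∈ M^{!,∞}_{2-k}(D,χ)` at the cusp `∞_r` satisfies
`c_r(0) + ∑_{m>0} c(-m) e_r(m) = 0`, where `∑ e_r(m) q^m` is the `q`-expansion (at `∞`) of the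
normalized Eisenstein series `E_r = χ_r(-β) χ_s(αr) (E ∣[k] W_r)` attached to the cusp `∞_r`,
and `∑ c_r(m) q^m` is the `q`-expansion of `χ_r(β) χ_s(α) (f ∣[2-k] W_r)`. -/
theorem eisenstein_constant_term_pairing
    (D : ℕ) (hD : Odd D) (hDsf : Squarefree D) (hDpos : 0 < D)
    (k : ℤ) (hk : 3 ≤ k)
    (χ : ℤ → ℂ) (hχ : IsQuadDirChar D χ) (hpar : χ (-1) = (-1) ^ k)
    -- the divisor r of D, with s = D / r
    (r s : ℕ) (hr : 0 < r) (hrs : r * s = D)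
    -- the factorization χ = χ_r ⬝ χ_s into characters mod r and mod s
    (χr χs : ℤ → ℂ)
    (hχr : ∀ x y : ℤ, Int.ModEq (r : ℤ) y x → Int.ModEq (s : ℤ) y 1 → χr x = χ y)
    (hχs : ∀ x y : ℤ, Int.ModEq (s : ℤ) y x → Int.ModEq (r : ℤ) y 1 → χs x = χ y)
    -- the Atkin–Lehner matrix W_r = [[rα, β], [Dγ, rδ]] of determinant r
    (α β γ δ : ℤ) (hdet : (r : ℤ) * α * δ - (s : ℤ) * β * γ = 1)
    -- e_r : the Fourier coefficients of E_r at ∞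
    (er : ℕ → ℂ)
    (her : ∀ τ ∈ UHP,
      HasSum (fun m : ℕ => er m * Complex.exp (2 * (Real.pi : ℂ) * Complex.I * m * τ))
        (χr (-β) * χs (α * (r : ℤ)) *
          slash k !![(r : ℝ) * (α : ℝ), (β : ℝ); (D : ℝ) * (γ : ℝ), (r : ℝ) * (δ : ℝ)]
            (Eser D χ k) τ))
    -- f ∈ M^{!,∞}_{2-k}(D, χ) with coefficients c
    (f : ℂ → ℂ) (c : ℤ → ℂ) (hf : IsWeaklyHolInfty D χ (2 - k) f c)
    -- c_r : the Fourier coefficients of f at the cusp ∞_r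
    (cr : ℤ → ℂ) (hcrbd : ∃ M : ℤ, ∀ m : ℤ, m < M → cr m = 0)
    (hcr : ∀ τ ∈ UHP,
      HasSum (fun m : ℤ => cr m * Complex.exp (2 * (Real.pi : ℂ) * Complex.I * m * τ))
        (χr β * χs α *
          slash (2 - k) !![(r : ℝ) * (α : ℝ), (β : ℝ); (D : ℝ) * (γ : ℝ), (r : ℝ) * (δ : ℝ)]
            f τ)) :
    cr 0 + ∑ᶠ m ∈ {m : ℕ | 0 < m}, c (-(m : ℤ)) * er m = 0 := by
  subst hrs
  have hs0 : 0 < s := Nat.pos_of_mul_pos_left hDpos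
  have hcop : IsCoprime (r : ℤ) (s : ℤ) :=
    Nat.isCoprime_iff_coprime.mpr (Nat.coprime_of_squarefree_mul hDsf)
  have hqr : IsQuadDirChar r χr := (hχ.component hcop hχr).1
  have hqs : IsQuadDirChar s χs :=
    ((mul_comm r s ▸ hχ : IsQuadDirChar (s * r) χ).component hcop.symm hχs).1
  have hmul : ∀ x, χ x = χr x * χs x := hχ.eq_mul_components hcop hχr hχs
  have hrC : (r : ℂ) ≠ 0 := by exact_mod_cast hr.ne'
  have hsq : (√(r : ℝ) : ℂ) ≠ 0 := by
    exact_mod_cast (Real.sqrt_pos.mpr (by exact_mod_cast hr : (0 : ℝ) < r)).ne'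
  have hsq2 : (√(r : ℝ) : ℂ) * √(r : ℝ) = r := by
    exact_mod_cast Real.mul_self_sqrt (by positivity : (0 : ℝ) ≤ r)
  set B : ℂ := (√(r : ℝ) : ℂ) ^ (-k) with hB
  set e : ℂ → ℂ := fun τ => B * (1 / 2) * latSum k (cuspWeight s χr χs) τ with he
  set a : ℤ → ℂ := fun m => if 0 ≤ m then er m.toNat else 0 with ha
  have ha0 : ∀ m < 0, a m = 0 := fun m hm => if_neg (not_le.mpr hm)
  have hea : HasQExp e a := hasQExp_of_nat fun τ hτ => by
    have h1 := her τ hτ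
    rwa [slash_Eser_eq hr hs0 hqr hqs hmul hdet k hτ] at h1
  have hed : DifferentiableOn ℂ e UHP := hea.differentiableOn ha0
  have hfc : HasQExp f c := hf.fourier
  set F : ℍ → ℂ := fun z => f z with hF
  set E : ℍ → ℂ := fun z => e z with hE
  have hEg : ∀ (g : SL(2, ℤ)) (z : ℍ), (E ∣[k] g) z =
      B * (1 / 2) * ((fun z : ℍ => latSum k (cuspWeight s χr χs) z) ∣[k] g) z := by
    intro g z
    rw [ModularForm.SL_slash_apply, ModularForm.SL_slash_apply]
    simp only [hE, he]
    ring
  set h : ℍ → ℂ := fun z => f z * e z with hh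
  have hhd : MDiff h := mdiff_of_differentiableOn (hf.holo.mul hed)
  have hsl : ∀ (g : SL(2, ℤ)), h ∣[(2 : ℤ)] g = fun z => (F ∣[2 - k] g) z * (E ∣[k] g) z := by
    intro g
    have h1 := ModularForm.mul_slash_SL2 (2 - k) k g F E
    rw [sub_add_cancel] at h1
    exact h1
  have hcont : ∀ g : SL(2, ℤ), Continuous (h ∣[(2 : ℤ)] g) := fun g =>
    (hhd.slash 2 (g : GL (Fin 2) ℝ)).continuous
  have hinv : ∀ g ∈ CongruenceSubgroup.Gamma0 (r * s), h ∣[(2 : ℤ)] g = h := by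
    intro g hg
    rw [CongruenceSubgroup.Gamma0_mem, ZMod.intCast_zmod_eq_zero_iff_dvd] at hg
    rw [hsl]
    funext z
    rw [hEg, latSum_slash_Gamma0 k hqr hqs hmul g hg z, hF, SL_slash_eq_slash,
      hf.transform g hg z z.2]
    have hco : IsCoprime (g 1 1) ((r * s : ℕ) : ℤ) := by
      obtain ⟨t, ht⟩ := hg
      exact ⟨g 0 0, -(g 0 1 * t), by linear_combination SL_det_eq g + g 0 1 * ht⟩
    simp only [hh, he]
    linear_combination (f z * (B * (1 / 2) * latSum k (cuspWeight s χr χs) z)) * hχ.sq_eq_one hco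
  have hElim : ∀ g : SL(2, ℤ), Filter.Tendsto (E ∣[k] g) cuspStrip
      (𝓝 (B * cuspWeight s χr χs (-g 1 0, g 0 0))) := by
    intro g
    have h1 := (latSum_slash_tendsto hk hqr hqs hmul hpar g).const_mul (B * (1 / 2))
    have h2 : B * cuspWeight s χr χs (-g 1 0, g 0 0) =
        B * (1 / 2) * (2 * cuspWeight s χr χs (-g 1 0, g 0 0)) := by ring
    rw [h2]
    exact h1.congr fun z => (hEg g z).symm
  have hNe : NeZero (r * s) := ⟨hDpos.ne'⟩
  let _ : Fintype (SL(2, ℤ) ⧸ CongruenceSubgroup.Gamma0 (r * s)) := Fintype.ofFinite _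
  classical
  let V : Fin r → SL(2, ℤ) := fun j => cuspRep r s α β γ δ hdet (j : ℕ)
  let mkV : Fin r → SL(2, ℤ) ⧸ CongruenceSubgroup.Gamma0 (r * s) :=
    fun j => (((V j)⁻¹ : SL(2, ℤ)) : SL(2, ℤ) ⧸ CongruenceSubgroup.Gamma0 (r * s))
  -- the cosets carrying the cusp `∞_r`
  let A := Finset.univ.image mkV
  let o : SL(2, ℤ) ⧸ CongruenceSubgroup.Gamma0 (r * s) := ((1 : SL(2, ℤ))⁻¹ : SL(2, ℤ))
  obtain ⟨m₀, hm₀⟩ := hf.coeff_bddBelow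
  have hM : ∀ m : ℤ, m < -(m₀.toNat : ℤ) → c m = 0 := fun m hm => hm₀ m (by omega)
  generalize m₀.toNat = M at hM
  set S : ℂ := ∑ m ∈ Finset.Icc 1 M, c (-(m : ℤ)) * er m with hS
  have hfin : ∑ᶠ m ∈ {m : ℕ | 0 < m}, c (-(m : ℤ)) * er m = S := by
    rw [hS]
    refine finsum_mem_eq_sum_of_inter_support_eq _ ?_
    ext m
    simp only [Set.mem_inter_iff, Set.mem_ofPred_eq, Function.mem_support, Finset.coe_Icc,
      Set.mem_Icc]
    refine ⟨fun h => ⟨⟨h.1, ?_⟩, h.2⟩, fun h => ⟨h.1.1, h.2⟩⟩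
    by_contra hcon
    exact h.2 (by rw [hM _ (by omega), zero_mul])
  rw [hfin]
  have hone : Filter.Tendsto (period (h ∣[(2 : ℤ)] o.out⁻¹)) Filter.atTop
      (𝓝 (c 0 * er 0 + S)) := by
    rw [slash_out_mk hinv 1, SlashAction.slash_one]
    have h1 := tendsto_period_mul hfc hea hf.holo hM ha0
    have h2 : c 0 * a 0 + ∑ m ∈ Finset.Icc 1 M, c (-(m : ℤ)) * a m = c 0 * er 0 + S := by
      simp [ha, hS]
    rwa [h2] at h1
  have her0 : er 0 = B * χr 0 := by
    have hec : Continuous E := (mdiff_of_differentiableOn hed).continuous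
    have h1 := hElim 1
    rw [SlashAction.slash_one] at h1
    have h2 := tendsto_period hec h1
    have h3 := tendsto_period hec ((hea.tendsto ha0).comp cuspStrip_le)
    have h4 := tendsto_nhds_unique h3 h2
    simpa [ha, cuspWeight, hqs.map_one, isCoprime_zero_left] using h4
  have hother : ∀ q, q ≠ o → q ∉ A →
      Filter.Tendsto (period (h ∣[(2 : ℤ)] q.out⁻¹)) Filter.atTop (𝓝 0) := by
    intro q hqo hqA
    set g := q.out⁻¹ with hg
    have hq : q = ((g⁻¹ : SL(2, ℤ)) : SL(2, ℤ) ⧸ CongruenceSubgroup.Gamma0 (r * s)) := by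
      rw [hg, inv_inv, QuotientGroup.out_eq']
    have hgD : ¬ ((r * s : ℕ) : ℤ) ∣ g 1 0 := by
      intro hdvd
      refine hqo (hq.trans (QuotientGroup.eq.mpr ?_))
      rw [inv_one, mul_one, inv_inv, CongruenceSubgroup.Gamma0_mem,
        ZMod.intCast_zmod_eq_zero_iff_dvd]
      exact hdvd
    have hzero : cuspWeight s χr χs (-g 1 0, g 0 0) = 0 := by
      by_contra hcon
      have h1 : IsCoprime (-g 1 0) (g 0 0) ∧ (s : ℤ) ∣ -g 1 0 := by
        by_contra h2
        exact hcon (if_neg h2)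
      have h2 : χr (-g 1 0) ≠ 0 := by
        intro h0
        apply hcon
        simp [cuspWeight, h0]
      rw [hqr.ne_zero_iff, IsCoprime.neg_left_iff] at h2
      obtain ⟨j, hj⟩ := exists_cuspRep hdet hr g (by simpa using h1.2) h2
      refine hqA (Finset.mem_image.mpr ⟨j, Finset.mem_univ _, ?_⟩)
      rw [hq]
      refine QuotientGroup.eq.mpr ?_
      have := inv_mem hj
      rwa [mul_inv_rev] at this
    obtain ⟨C, hC⟩ := hf.bdd_at_other_cusps g hgD
    refine tendsto_period (hcont g) ?_
    rw [hsl]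
    have h1 := hElim g
    rw [hzero, mul_zero] at h1
    refine Filter.Tendsto.zero_mul_isBoundedUnder_le
      (f := E ∣[k] g) (g := F ∣[2 - k] g) h1 ?_ |>.congr fun z => mul_comm _ _
    refine Filter.isBoundedUnder_of_eventually_le (a := C) ?_
    have h2 : ∀ᶠ z : ℍ in cuspStrip, 1 ≤ z.im :=
      (Filter.tendsto_comap.mono_left inf_le_left).eventually (Filter.eventually_ge_atTop 1)
    filter_upwards [h2] with z hz
    simp only [Function.comp_apply, hF]
    rw [SL_slash_eq_slash]
    exact hC z hz
  have hβ : IsCoprime β (r : ℤ) := ⟨-(s * γ), α * δ, by linear_combination hdet⟩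
  have hα : IsCoprime α (s : ℤ) := ⟨r * δ, -(β * γ), by linear_combination hdet⟩
  set ε := χr β * χs α with hε
  have hε2 : ε * ε = 1 := by
    rw [hε]
    linear_combination (χs α * χs α) * hqr.sq_eq_one hβ + hqs.sq_eq_one hα
  have hcrq : HasQExp (fun τ => ε * slash (2 - k) !![(r : ℝ) * (α : ℝ), (β : ℝ);
      ((r * s : ℕ) : ℝ) * (γ : ℝ), (r : ℝ) * (δ : ℝ)] f τ) cr := hcr
  rcases Nat.lt_or_ge 1 r with hr1 | hr1
  · -- `r > 1`: the coset of the identity contributes the sum, the cosets in `A` contribute `c_r(0)`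
    have hχ0 : χr 0 = 0 := by
      rw [hqr.eq_zero_iff, isCoprime_zero_left, Int.ofNat_isUnit, Nat.isUnit_iff]
      omega
    have hinj : Function.Injective mkV := by
      intro i j hij
      refine cuspRep_injective hdet hs0 i j ?_
      have := QuotientGroup.eq.mp hij
      rwa [inv_inv] at this
    have hoA : o ∉ A := by
      intro ho
      obtain ⟨j, -, hj⟩ := Finset.mem_image.mp ho
      have h1 := QuotientGroup.eq.mp hj
      rw [inv_inv, inv_one, mul_one, CongruenceSubgroup.Gamma0_mem,
        ZMod.intCast_zmod_eq_zero_iff_dvd] at h1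
      exact not_dvd_cuspRep hdet hr1 _ h1
    have hA : ∀ q ∈ A, Filter.Tendsto (period (h ∣[(2 : ℤ)] q.out⁻¹)) Filter.atTop
        (𝓝 (cr 0 / r)) := by
      intro q hq
      obtain ⟨j, -, rfl⟩ := Finset.mem_image.mp hq
      rw [slash_out_mk hinv (V j)]
      refine tendsto_period (hcont _) ?_
      rw [hsl]
      have h1 := (tendsto_slash_cuspRep hdet hr1 hε2 hcrq hf.bdd_at_other_cusps (j : ℕ)).mul
        (hElim (V j))
      have hw : cuspWeight s χr χs (-V j 1 0, V j 0 0) = χr (-(s * γ)) * χs α :=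
        if_pos ⟨⟨β, r * δ, by
          change β * -(s * γ) + r * δ * α = 1
          linear_combination hdet⟩, (dvd_mul_right _ _).neg_right⟩
      have hval : (√(r : ℝ) : ℂ) ^ (-(2 - k)) * (ε * cr 0) *
          (B * cuspWeight s χr χs (-V j 1 0, V j 0 0)) = cr 0 / r := by
        have e1 : χr β * χr (-(s * γ)) = 1 := by
          rw [← hqr.mul, ← hqr.map_one]
          exact hqr.congr (Int.modEq_iff_dvd.mpr ⟨α * δ, by linear_combination -hdet⟩)
        have e2 : (√(r : ℝ) : ℂ) ^ (-(2 - k)) * B * r = 1 := by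
          rw [hB, ← zpow_add₀ hsq, ← hsq2]
          have : -(2 - k) + -k = -2 := by ring
          rw [this, zpow_neg, ← pow_two]
          exact inv_mul_cancel₀ (pow_ne_zero 2 hsq)
        rw [hw, hε, eq_div_iff hrC]
        linear_combination (cr 0 * χr β * χr (-(s * γ)) * χs α * χs α) * e2 +
          (cr 0 * χs α * χs α) * e1 + cr 0 * hqs.sq_eq_one hα
      rw [hval] at h1
      exact h1
    have hsum := sum_limits_eq_zero (L := fun q => (if q = o then c 0 * er 0 + S else 0) +
      if q ∈ A then cr 0 / r else 0) hhd hinv (by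
        intro q
        by_cases hqo : q = o
        · subst hqo
          simpa [hoA] using hone
        · by_cases hqA : q ∈ A
          · simpa [hqo, hqA] using hA q hqA
          · simpa [hqo, hqA] using hother q hqo hqA)
    rw [Finset.sum_add_distrib, Finset.sum_ite_eq' Finset.univ o, Finset.sum_ite_mem,
      Finset.univ_inter, Finset.sum_const, Finset.card_image_of_injective _ hinj,
      Finset.card_univ, Fintype.card_fin, nsmul_eq_mul, mul_div_cancel₀ _ hrC, her0, hχ0] at hsum
    simp only [Finset.mem_univ, if_true, mul_zero, zero_add] at hsum
    rw [add_comm]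
    exact hsum
  · -- `r = 1`: the cusp `∞_r` is `∞` itself
    obtain rfl : r = 1 := by omega
    have hχ1 : ∀ x, χr x = 1 := by
      intro x
      rw [hqr.congr (b := 1) (by simp [Int.modEq_one]), hqr.map_one]
    have hV : ∀ j, V j = cuspRep 1 s α β γ δ hdet 0 := by
      intro j
      simp [V, Subsingleton.elim j 0]
    have hVD : ((1 * s : ℕ) : ℤ) ∣ cuspRep 1 s α β γ δ hdet 0 1 0 := by
      change ((1 * s : ℕ) : ℤ) ∣ s * γ
      simp
    have hAo : ∀ q ∈ A, q = o := by
      intro q hq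
      obtain ⟨j, -, rfl⟩ := Finset.mem_image.mp hq
      refine QuotientGroup.eq.mpr ?_
      rw [inv_inv, inv_one, mul_one, hV, CongruenceSubgroup.Gamma0_mem,
        ZMod.intCast_zmod_eq_zero_iff_dvd]
      exact hVD
    have hsum := sum_limits_eq_zero (L := fun q => if q = o then c 0 * er 0 + S else 0) hhd hinv
      (by
        intro q
        by_cases hqo : q = o
        · subst hqo
          simpa using hone
        · simpa [hqo] using hother q hqo fun hqA => hqo (hAo q hqA))
    rw [Finset.sum_ite_eq' Finset.univ o, if_pos (Finset.mem_univ _), her0, hχ1] at hsum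
    have hB1 : B = 1 := by simp [hB]
    have hcr0 : cr 0 = c 0 := by
      rw [← hcrq.integral_eq 0 one_pos, ← hfc.integral_eq 0 one_pos]
      congr 1
      funext x
      have hx : (x : ℂ) + (1 : ℝ) * Complex.I ∈ UHP := by simp [UHP]
      congr 1
      generalize (x : ℂ) + (1 : ℝ) * Complex.I = τ at hx
      have h1 := slash_cuspRep hdet hr (2 - k) f 0 τ
      rw [hf.transform _ hVD _ hx] at h1
      have h2 : χs α = χs (cuspRep 1 s α β γ δ hdet 0 1 1) := by
        refine hqs.eq_of_mul_modEq_one (Int.modEq_iff_dvd.mpr ⟨-(β * γ), ?_⟩)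
        change 1 - α * (s * γ * 0 + (1 : ℕ) * δ) = _
        linear_combination -hdet
      simp only [Nat.cast_one, Real.sqrt_one, Complex.ofReal_one, one_zpow, one_mul, Int.cast_zero,
        add_zero, div_one] at h1
      rw [hmul, hχ1, one_mul, ← h2] at h1
      simp only [Nat.cast_one, one_mul]
      rw [← h1, ← mul_assoc, hε, hχ1, one_mul, hqs.sq_eq_one hα, one_mul]
    rw [hcr0, ← hsum, hB1]
    ring
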